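/- arXiv:2308.01388 — 2 statements merged into one kernel-verified Lean document; each statement's English description precedes it below -/
import Mathlib

section
/- (Theorem 4.1(iii), third case.) Uniformly over all λ ∈ C⁺ and all X ∈ a with x2 ≥ x3 ≥ x1 such that α_λ ≥ β_λ and α_λ α_{X⁺} ≤ β_λ β_{X⁺}, one has E_k(X,λ) ≍ e^{⟨λ,X⁺⟩} / [ (1+α_λ α_{X⁺})^{k+1} (1+β_λ β_{X⁺})^{k} (1+γ_λ γ_{X⁺})^{k+1} ]. -/
open Real MeasureTheory

/-- The rank-one Dunkl kernel `E_k^{rk1}(x,v)`. -/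
noncomputable def Erk1 (k x v : ℝ) : ℝ :=
  (Real.Gamma (k + 1/2) / (Real.sqrt Real.pi * Real.Gamma k)) *
    ∫ z in (-1 : ℝ)..1, Real.exp (z * x * v) * (1 - z) ^ (k - 1) * (1 + z) ^ k

/-- The normalized modified Bessel function `𝒥_a(y)`, for `a > -1/2`. -/
noncomputable def besselJ (a y : ℝ) : ℝ :=
  (Real.Gamma (a + 1) / (Real.sqrt Real.pi * Real.Gamma (a + 1/2))) *
    ∫ z in (-1 : ℝ)..1, Real.exp (y * z) * (1 - z ^ 2) ^ (a - 1/2)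

/-- `W_k(λ,ν)`. -/
noncomputable def Wk (k l1 l2 l3 n1 n2 : ℝ) : ℝ :=
  ((l1 - n1) * (l1 - n2) * (n1 - l2) * (l2 - n2) * (n1 - l3) * (n2 - l3)) ^ (k - 1)

/-- `V(λ) = (λ1-λ2)(λ1-λ3)(λ2-λ3)`. -/
def Vlam (l1 l2 l3 : ℝ) : ℝ := (l1 - l2) * (l1 - l3) * (l2 - l3)

/-- The `A₂` Dunkl kernel `E_k(X,λ)`, defined via the rank-one kernel formula. -/
noncomputable def EkA2 (k x1 x2 x3 l1 l2 l3 : ℝ) : ℝ :=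
  (3 * Real.Gamma (3 * k) / (Vlam l1 l2 l3 ^ (2 * k) * Real.Gamma k ^ 2)) *
    ∫ n2 in l3..l2, ∫ n1 in l2..l1,
      ((n1 - l2) * (l1 - n2) * Erk1 k ((x1 - x2) / 2) (n1 - n2)
        + (l1 - n1) * (l2 - n2) * Erk1 k (-(x1 - x2) / 2) (n1 - n2))
      * ((n1 - l3) * (n2 - l3)) * Real.exp ((x1 + x2 - 2 * x3) * (n1 + n2) / 2)
      * Wk k l1 l2 l3 n1 n2


open Set

noncomputable def jf (c d A s : ℝ) : ℝ := exp (-(A * s)) * s ^ (c-1) * (1-s) ^ (d-1)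

lemma pow_exp_bd (m : ℝ) (hm : 0 < m) : ∃ C : ℝ, 0 < C ∧ ∀ x : ℝ, 0 ≤ x → (1+x)^m ≤ C * exp (x/4) := by
  refine ⟨(1+4*m)^m, by positivity, fun x hx => ?_⟩
  have h1 : 1 + x ≤ (1+4*m) * exp (x/(4*m)) := by
    have := add_one_le_exp (x/(4*m))
    calc 1 + x ≤ (1+4*m) * (x/(4*m) + 1) := by
          have : (1+4*m) * (x/(4*m) + 1) = x/(4*m) + x + 1 + 4*m := by field_simp; ring
          rw [this]; have : 0 ≤ x/(4*m) := by positivity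
          linarith
      _ ≤ _ := by gcongr
  calc (1+x)^m ≤ ((1+4*m) * exp (x/(4*m)))^m := by gcongr
    _ = _ := by
      rw [mul_rpow (by positivity) (by positivity), ← exp_mul]
      congr 2; field_simp

lemma jf_nonneg (c d A s : ℝ) (hs : s ∈ Ioo (0:ℝ) 1) : 0 ≤ jf c d A s := by
  have := hs.1; have := hs.2
  have : 0 < 1 - s := by linarith
  unfold jf; positivity

lemma beta_int (c d : ℝ) (hc : 0 < c) (hd : 0 < d) :
    IntegrableOn (fun s : ℝ => s ^ (c-1) * (1-s) ^ (d-1)) (Ioo 0 1) := by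
  have h := Complex.betaIntegral_convergent (u := c) (v := d) (by simpa) (by simpa)
  rw [intervalIntegrable_iff_integrableOn_Ioo_of_le zero_le_one] at h
  have h2 := h.norm
  refine IntegrableOn.congr_fun h2 ?_ measurableSet_Ioo
  intro s hs
  have h1 := hs.1; have h2 := hs.2
  have h3 : 0 < 1 - s := by linarith
  have e2 : (1 - (s:ℂ)) = ((1 - s : ℝ) : ℂ) := by push_cast; rfl
  simp only [norm_mul]
  rw [e2, Complex.norm_cpow_eq_rpow_re_of_pos h1, Complex.norm_cpow_eq_rpow_re_of_pos h3]
  simp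

lemma jf_int (c d A : ℝ) (hc : 0 < c) (hd : 0 < d) (hA : 0 ≤ A) :
    IntegrableOn (jf c d A) (Ioo 0 1) := by
  refine Integrable.mono' (beta_int c d hc hd) ?_ ?_
  · unfold jf; exact (by fun_prop : Measurable _).aestronglyMeasurable
  · refine (ae_restrict_iff' measurableSet_Ioo).2 (ae_of_all _ fun s hs => ?_)
    rw [norm_of_nonneg (jf_nonneg c d A s hs)]
    have h1 := hs.1; have h2 := hs.2
    have h3 : 0 < 1 - s := by linarith
    unfold jf
    have : exp (-(A*s)) ≤ 1 := by rw [exp_le_one_iff]; have := mul_nonneg hA h1.le; linarith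
    rw [mul_assoc]
    exact mul_le_of_le_one_left (by positivity) this

lemma J_upper (c d : ℝ) (hc : 0 < c) (hd : 0 < d) : ∃ C : ℝ, 0 < C ∧ ∀ A : ℝ, 0 ≤ A →
    ∫ s in Ioo (0:ℝ) 1, jf c d A s ≤ C * ((1+A)⁻¹)^c := by
  obtain ⟨C1, hC1, hb⟩ := pow_exp_bd c hc
  set β := ∫ s in Ioo (0:ℝ) 1, s ^ (c-1) * (1-s) ^ (d-1) with hβ
  have hβ0 : 0 ≤ β := setIntegral_nonneg measurableSet_Ioo (fun s hs => by
    have h1 := hs.1; have h2 := hs.2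
    have h3 : 0 < 1 - s := by linarith
    positivity)
  have hΓ := Gamma_pos_of_pos hc
  refine ⟨2 * exp 1 * Gamma c + 2^c * C1 * β, by positivity, fun A hA => ?_⟩
  have hg : IntegrableOn (fun s => s^(c-1) * exp (-((1+A) * s))) (Ioi 0) := by
    have := integrableOn_rpow_mul_exp_neg_mul_rpow (s := c-1) (p := 1) (b := 1+A) (by linarith) one_pos (by linarith)
    simpa only [rpow_one, neg_mul] using this
  have hg1 : IntegrableOn (fun s => s^(c-1) * exp (-((1+A) * s))) (Ioo 0 1) := hg.mono_set Ioo_subset_Ioi_self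
  have key : ∀ s ∈ Ioo (0:ℝ) 1, jf c d A s ≤ 2 * exp 1 * (s^(c-1) * exp (-((1+A) * s)))
      + (2^c * C1 * ((1+A)⁻¹)^c) * (s ^ (c-1) * (1-s) ^ (d-1)) := by
    intro s hs
    have h1 := hs.1; have h2 := hs.2
    have h3 : 0 < 1 - s := by linarith
    unfold jf
    rcases le_total s (1/2) with h | h
    · have e1 : (1-s)^(d-1) ≤ 2 := by
        rw [rpow_sub_one h3.ne', div_le_iff₀ h3]
        have : (1-s)^d ≤ 1 := rpow_le_one h3.le (by linarith) hd.le
        linarith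
      have e2 : exp (-(A*s)) ≤ exp 1 * exp (-((1+A)*s)) := by
        rw [← exp_add]; apply exp_le_exp.2; linarith
      calc _ ≤ (exp 1 * exp (-((1+A)*s))) * s^(c-1) * 2 := by gcongr
        _ = 2 * exp 1 * (s^(c-1) * exp (-((1+A) * s))) := by ring
        _ ≤ _ := le_add_of_nonneg_right (by positivity)
    · have e1 : exp (-(A*s)) ≤ 2^c * C1 * ((1+A)⁻¹)^c := by
        have f1 := hb (A*s) (by positivity)
        have f2 : ((1+A) * (1/2))^c ≤ (1+A*s)^c := by gcongr; nlinarith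
        have f3 : exp (A*s/4) ≤ exp (A*s) := exp_le_exp.2 (by have := mul_nonneg hA h1.le; linarith)
        have f4 : (1+A)^c * (1/2)^c ≤ C1 * exp (A*s) := by
          rw [← mul_rpow (by positivity) (by norm_num)]
          exact f2.trans (f1.trans (by gcongr))
        rw [exp_neg, inv_rpow (by positivity), ← one_div, div_le_iff₀ (exp_pos _)]
        rw [one_div, inv_rpow (by norm_num)] at f4
        have p1 : 0 < (1+A)^c := by positivity
        have p2 : (0:ℝ) < 2^c := by positivity
        rw [show 2^c * C1 * ((1+A)^c)⁻¹ * exp (A*s) = (C1 * exp (A*s)) * 2^c / (1+A)^c by field_simp]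
        rw [le_div_iff₀ p1, one_mul]
        calc (1+A)^c = (1+A)^c * (2^c)⁻¹ * 2^c := by field_simp
          _ ≤ _ := by gcongr
      rw [mul_assoc]
      calc _ ≤ (2^c * C1 * ((1+A)⁻¹)^c) * (s ^ (c-1) * (1-s) ^ (d-1)) := by gcongr
        _ ≤ _ := le_add_of_nonneg_left (by positivity)
  have hi2 := (beta_int c d hc hd).const_mul (2^c * C1 * ((1+A)⁻¹)^c)
  have hi1 := hg1.const_mul (2 * exp 1)
  calc _ ≤ ∫ s in Ioo (0:ℝ) 1, (2 * exp 1 * (s^(c-1) * exp (-((1+A) * s)))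
      + (2^c * C1 * ((1+A)⁻¹)^c) * (s ^ (c-1) * (1-s) ^ (d-1))) :=
        setIntegral_mono_on (jf_int c d A hc hd hA) (hi1.add hi2) measurableSet_Ioo key
    _ = 2 * exp 1 * (∫ s in Ioo (0:ℝ) 1, s^(c-1) * exp (-((1+A) * s))) + (2^c * C1 * ((1+A)⁻¹)^c) * β := by
        rw [integral_add hi1 hi2, integral_const_mul, integral_const_mul]
    _ ≤ 2 * exp 1 * (((1+A)⁻¹)^c * Gamma c) + (2^c * C1 * ((1+A)⁻¹)^c) * β := by
        gcongr
        rw [← one_div, ← integral_rpow_mul_exp_neg_mul_Ioi hc (by linarith : 0 < 1+A)]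
        refine setIntegral_mono_set hg ?_ (Ioo_subset_Ioi_self.eventuallyLE)
        refine (ae_restrict_iff' measurableSet_Ioi).2 (ae_of_all _ fun s hs => ?_)
        have : 0 < s := hs
        simp only [Pi.zero_apply]; positivity
    _ = _ := by ring

lemma J_lower (c d : ℝ) (hc : 0 < c) (hd : 0 < d) : ∃ C : ℝ, 0 < C ∧ ∀ A : ℝ, 0 ≤ A →
    C * ((1+A)⁻¹)^c ≤ ∫ s in Ioo (0:ℝ) 1, jf c d A s := by
  refine ⟨exp (-1) * (1/2)^d * ((1/2)^c / c), by positivity, fun A hA => ?_⟩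
  set δ := 1/2 * (1+A)⁻¹ with hδ
  have hδ0 : 0 < δ := by positivity
  have hAi : (1+A)⁻¹ ≤ 1 := inv_le_one_of_one_le₀ (by linarith)
  have hδ1 : δ ≤ 1/2 := by linarith
  have hAd : A * δ ≤ 1 := by
    have : (1+A) * (1+A)⁻¹ = 1 := mul_inv_cancel₀ (by positivity)
    have h2 : 0 < (1+A)⁻¹ := by positivity
    rw [hδ]; nlinarith
  have hi : IntegrableOn (fun s : ℝ => s^(c-1)) (Ioo 0 δ) := by
    rw [← intervalIntegrable_iff_integrableOn_Ioo_of_le hδ0.le]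
    exact intervalIntegral.intervalIntegrable_rpow' (by linarith)
  have hI : ∫ s in Ioo (0:ℝ) δ, s^(c-1) = δ^c/c := by
    rw [← integral_Ioc_eq_integral_Ioo, ← intervalIntegral.integral_of_le hδ0.le, integral_rpow (Or.inl (by linarith))]
    simp [zero_rpow hc.ne']
  have hsub : Ioo (0:ℝ) δ ⊆ Ioo 0 1 := Ioo_subset_Ioo_right (by linarith)
  calc exp (-1) * (1/2)^d * ((1/2)^c / c) * ((1+A)⁻¹)^c = (exp (-1) * (1/2)^d) * (δ^c/c) := by
        rw [hδ, mul_rpow (by norm_num) (by positivity)]; ring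
    _ = ∫ s in Ioo (0:ℝ) δ, (exp (-1) * (1/2)^d) * s^(c-1) := by rw [integral_const_mul, hI]
    _ ≤ ∫ s in Ioo (0:ℝ) δ, jf c d A s := by
        refine setIntegral_mono_on (hi.const_mul _) ((jf_int c d A hc hd hA).mono_set hsub) measurableSet_Ioo ?_
        intro s hs
        have h1 := hs.1; have h2 := hs.2
        have h3 : 0 < 1 - s := by linarith
        have e1 : exp (-1) ≤ exp (-(A*s)) := exp_le_exp.2 (by nlinarith)
        have e2 : (1/2:ℝ)^d ≤ (1-s)^(d-1) := by
          calc (1/2:ℝ)^d ≤ (1-s)^d := by gcongr; linarith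
            _ ≤ _ := rpow_le_rpow_of_exponent_ge h3 (by linarith) (by linarith)
        unfold jf
        calc _ = exp (-1) * s^(c-1) * (1/2)^d := by ring
          _ ≤ _ := by gcongr
    _ ≤ _ := by
        refine setIntegral_mono_set (jf_int c d A hc hd hA) ?_ hsub.eventuallyLE
        exact (ae_restrict_iff' measurableSet_Ioo).2 (ae_of_all _ fun s hs => jf_nonneg c d A s hs)

lemma two_d (F : ℝ → ℝ → ℝ) (hF : Measurable (Function.uncurry F)) (f1 g1 f2 g2 f3 g3 f4 g4 : ℝ → ℝ)
    (c1 c2 c3 c4 : ℝ)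
    (i1 : IntegrableOn f1 (Ioo 0 1)) (j1 : IntegrableOn g1 (Ioo 0 1))
    (i2 : IntegrableOn f2 (Ioo 0 1)) (j2 : IntegrableOn g2 (Ioo 0 1))
    (i3 : IntegrableOn f3 (Ioo 0 1)) (j3 : IntegrableOn g3 (Ioo 0 1))
    (i4 : IntegrableOn f4 (Ioo 0 1)) (j4 : IntegrableOn g4 (Ioo 0 1))
    (h0 : ∀ t ∈ Ioo (0:ℝ) 1, ∀ s ∈ Ioo (0:ℝ) 1, 0 ≤ F t s)
    (hl : ∀ t ∈ Ioo (0:ℝ) 1, ∀ s ∈ Ioo (0:ℝ) 1, c1 * (f1 t * g1 s) + c2 * (f2 t * g2 s) ≤ F t s)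
    (hu : ∀ t ∈ Ioo (0:ℝ) 1, ∀ s ∈ Ioo (0:ℝ) 1, F t s ≤ c3 * (f3 t * g3 s) + c4 * (f4 t * g4 s)) :
    c1 * ((∫ t in Ioo (0:ℝ) 1, f1 t) * ∫ s in Ioo (0:ℝ) 1, g1 s)
      + c2 * ((∫ t in Ioo (0:ℝ) 1, f2 t) * ∫ s in Ioo (0:ℝ) 1, g2 s)
      ≤ (∫ t in (0:ℝ)..1, ∫ s in (0:ℝ)..1, F t s) ∧
    (∫ t in (0:ℝ)..1, ∫ s in (0:ℝ)..1, F t s) ≤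
    c3 * ((∫ t in Ioo (0:ℝ) 1, f3 t) * ∫ s in Ioo (0:ℝ) 1, g3 s)
      + c4 * ((∫ t in Ioo (0:ℝ) 1, f4 t) * ∫ s in Ioo (0:ℝ) 1, g4 s) := by
  simp only [intervalIntegral.integral_of_le zero_le_one, integral_Ioc_eq_integral_Ioo]
  set μ : Measure ℝ := volume.restrict (Ioo (0:ℝ) 1) with hμ
  have q1 : Integrable (fun z : ℝ × ℝ => c1 * (f1 z.1 * g1 z.2)) (μ.prod μ) := (Integrable.mul_prod i1 j1).const_mul c1
  have q2 : Integrable (fun z : ℝ × ℝ => c2 * (f2 z.1 * g2 z.2)) (μ.prod μ) := (Integrable.mul_prod i2 j2).const_mul c2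
  have q3 : Integrable (fun z : ℝ × ℝ => c3 * (f3 z.1 * g3 z.2)) (μ.prod μ) := (Integrable.mul_prod i3 j3).const_mul c3
  have q4 : Integrable (fun z : ℝ × ℝ => c4 * (f4 z.1 * g4 z.2)) (μ.prod μ) := (Integrable.mul_prod i4 j4).const_mul c4
  have hae : ∀ᵐ z ∂(μ.prod μ), z ∈ Ioo (0:ℝ) 1 ×ˢ Ioo (0:ℝ) 1 := by
    rw [hμ, Measure.prod_restrict]
    exact ae_restrict_mem (measurableSet_Ioo.prod measurableSet_Ioo)
  have qF : Integrable (Function.uncurry F) (μ.prod μ) := by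
    refine Integrable.mono' (q3.add q4) hF.aestronglyMeasurable ?_
    filter_upwards [hae] with z hz
    rw [norm_of_nonneg (show 0 ≤ Function.uncurry F z from h0 z.1 hz.1 z.2 hz.2)]
    exact hu z.1 hz.1 z.2 hz.2
  have eF : ∫ t, ∫ s, F t s ∂μ ∂μ = ∫ z, Function.uncurry F z ∂(μ.prod μ) := by
    rw [integral_prod _ qF]; rfl
  rw [eF]
  constructor
  · calc _ = ∫ z : ℝ × ℝ, (c1 * (f1 z.1 * g1 z.2) + c2 * (f2 z.1 * g2 z.2)) ∂(μ.prod μ) := by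
          rw [integral_add q1 q2, integral_const_mul, integral_const_mul, integral_prod_mul, integral_prod_mul]
      _ ≤ _ := by
          refine integral_mono_ae (q1.add q2) qF ?_
          filter_upwards [hae] with z hz
          exact hl z.1 hz.1 z.2 hz.2
  · calc _ ≤ ∫ z : ℝ × ℝ, (c3 * (f3 z.1 * g3 z.2) + c4 * (f4 z.1 * g4 z.2)) ∂(μ.prod μ) := by
          refine integral_mono_ae qF (q3.add q4) ?_
          filter_upwards [hae] with z hz
          exact hu z.1 hz.1 z.2 hz.2
      _ = _ := by
          rw [integral_add q3 q4, integral_const_mul, integral_const_mul, integral_prod_mul, integral_prod_mul]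

lemma Erk1_pos_eq (k x v y : ℝ) (h : x * v = y) : Erk1 k x v =
    (Real.Gamma (k + 1/2) / (Real.sqrt Real.pi * Real.Gamma k)) * (2 * 2^(k-1) * 2^k) *
     (exp y * ∫ s in Ioo (0:ℝ) 1, jf k (k+1) (2*y) s) := by
  unfold Erk1
  have e := intervalIntegral.mul_integral_comp_sub_mul
    (f := fun z : ℝ => Real.exp (z * x * v) * (1 - z) ^ (k - 1) * (1 + z) ^ k) (a := 0) (b := 1) (2:ℝ) 1
  rw [show (1:ℝ) - 2 * 1 = -1 by norm_num, show (1:ℝ) - 2 * 0 = 1 by norm_num] at e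
  rw [← e, intervalIntegral.integral_of_le zero_le_one, integral_Ioc_eq_integral_Ioo]
  rw [mul_assoc (Real.Gamma (k + 1/2) / (Real.sqrt Real.pi * Real.Gamma k))]
  congr 1
  rw [← mul_assoc, ← integral_const_mul, ← integral_const_mul]
  refine setIntegral_congr_fun measurableSet_Ioo fun s hs => ?_
  have h1 := hs.1; have h2 := hs.2
  have h3 : 0 < 1 - s := by linarith
  simp only [jf]
  rw [show 1 - (1 - 2*s) = 2 * s by ring, show 1 + (1 - 2*s) = 2 * (1-s) by ring,
    mul_rpow (by norm_num) h1.le, mul_rpow (by norm_num) h3.le,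
    show (1 - 2*s) * x * v = y + -(2*y*s) by rw [← h]; ring, exp_add, add_sub_cancel_right]
  ring

lemma Erk1_neg_eq (k x v y : ℝ) (h : x * v = -y) : Erk1 k x v =
    (Real.Gamma (k + 1/2) / (Real.sqrt Real.pi * Real.Gamma k)) * (2 * 2^(k-1) * 2^k) *
     (exp y * ∫ s in Ioo (0:ℝ) 1, jf (k+1) k (2*y) s) := by
  unfold Erk1
  have e := intervalIntegral.mul_integral_comp_add_mul
    (f := fun z : ℝ => Real.exp (z * x * v) * (1 - z) ^ (k - 1) * (1 + z) ^ k) (a := 0) (b := 1) (2:ℝ) (-1)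
  rw [show (-1:ℝ) + 2 * 1 = 1 by norm_num, show (-1:ℝ) + 2 * 0 = -1 by norm_num] at e
  rw [← e, intervalIntegral.integral_of_le zero_le_one, integral_Ioc_eq_integral_Ioo]
  rw [mul_assoc (Real.Gamma (k + 1/2) / (Real.sqrt Real.pi * Real.Gamma k))]
  congr 1
  rw [← mul_assoc, ← integral_const_mul, ← integral_const_mul]
  refine setIntegral_congr_fun measurableSet_Ioo fun s hs => ?_
  have h1 := hs.1; have h2 := hs.2
  have h3 : 0 < 1 - s := by linarith
  simp only [jf]
  rw [show 1 - (-1 + 2*s) = 2 * (1 - s) by ring, show 1 + (-1 + 2*s) = 2 * s by ring,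
    mul_rpow (by norm_num) h1.le, mul_rpow (by norm_num) h3.le,
    show (-1 + 2*s) * x * v = y + -(2*y*s) by rw [mul_assoc, h]; ring, exp_add, add_sub_cancel_right]
  ring

lemma Erk1_bd (k : ℝ) (hk : 0 < k) : ∃ c C : ℝ, 0 < c ∧ 0 < C ∧ ∀ x v y : ℝ, 0 ≤ y →
    (x * v = y → c * (exp y * ((1+2*y)⁻¹)^k) ≤ Erk1 k x v ∧ Erk1 k x v ≤ C * (exp y * ((1+2*y)⁻¹)^k)) ∧
    (x * v = -y → c * (exp y * ((1+2*y)⁻¹)^(k+1)) ≤ Erk1 k x v ∧ Erk1 k x v ≤ C * (exp y * ((1+2*y)⁻¹)^(k+1))) := by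
  obtain ⟨c1, hc1, b1⟩ := J_lower k (k+1) hk (by linarith)
  obtain ⟨c2, hc2, b2⟩ := J_upper k (k+1) hk (by linarith)
  obtain ⟨c3, hc3, b3⟩ := J_lower (k+1) k (by linarith) hk
  obtain ⟨c4, hc4, b4⟩ := J_upper (k+1) k (by linarith) hk
  have hK : 0 < (Real.Gamma (k + 1/2) / (Real.sqrt Real.pi * Real.Gamma k)) * (2 * 2^(k-1) * 2^k) := by
    have := Gamma_pos_of_pos hk
    have := Gamma_pos_of_pos (show 0 < k + 1/2 by linarith)
    have := sqrt_pos.2 pi_pos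
    positivity
  refine ⟨((Real.Gamma (k + 1/2) / (Real.sqrt Real.pi * Real.Gamma k)) * (2 * 2^(k-1) * 2^k)) * min c1 c3,
    ((Real.Gamma (k + 1/2) / (Real.sqrt Real.pi * Real.Gamma k)) * (2 * 2^(k-1) * 2^k)) * max c2 c4,
    by positivity, by positivity, fun x v y hy => ⟨fun h => ?_, fun h => ?_⟩⟩
  · rw [Erk1_pos_eq k x v y h]
    generalize (Real.Gamma (k + 1/2) / (Real.sqrt Real.pi * Real.Gamma k)) * (2 * 2^(k-1) * 2^k) = K at *
    constructor
    · calc _ = K * (exp y * (min c1 c3 * ((1+2*y)⁻¹)^k)) := by ring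
        _ ≤ K * (exp y * (c1 * ((1+2*y)⁻¹)^k)) := by gcongr; exact min_le_left _ _
        _ ≤ _ := by gcongr; exact b1 (2*y) (by linarith)
    · calc _ ≤ K * (exp y * (c2 * ((1+2*y)⁻¹)^k)) := by gcongr; exact b2 (2*y) (by linarith)
        _ ≤ K * (exp y * (max c2 c4 * ((1+2*y)⁻¹)^k)) := by gcongr; exact le_max_left _ _
        _ = _ := by ring
  · rw [Erk1_neg_eq k x v y h]
    generalize (Real.Gamma (k + 1/2) / (Real.sqrt Real.pi * Real.Gamma k)) * (2 * 2^(k-1) * 2^k) = K at *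
    constructor
    · calc _ = K * (exp y * (min c1 c3 * ((1+2*y)⁻¹)^(k+1))) := by ring
        _ ≤ K * (exp y * (c3 * ((1+2*y)⁻¹)^(k+1))) := by gcongr; exact min_le_right _ _
        _ ≤ _ := by gcongr; exact b3 (2*y) (by linarith)
    · calc _ ≤ K * (exp y * (c4 * ((1+2*y)⁻¹)^(k+1))) := by gcongr; exact b4 (2*y) (by linarith)
        _ ≤ K * (exp y * (max c2 c4 * ((1+2*y)⁻¹)^(k+1))) := by gcongr; exact le_max_right _ _
        _ = _ := by ring

lemma Erk1_meas (k x : ℝ) : Measurable (fun v => Erk1 k x v) := by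
  unfold Erk1
  refine Measurable.const_mul ?_ _
  simp only [intervalIntegral.integral_of_le (show (-1:ℝ) ≤ 1 by norm_num)]
  refine (StronglyMeasurable.integral_prod_right (f := fun v z : ℝ => Real.exp (z * x * v) * (1 - z) ^ (k - 1) * (1 + z) ^ k) ?_).measurable
  exact (by unfold Function.uncurry; fun_prop : Measurable _).stronglyMeasurable

lemma core_id (k p ε s t r τ E1 E2 K G X : ℝ) (hp : 0 < p) (hε : 0 < ε) (hs : 0 < s) (ht : 0 < t)
    (hr : 0 < r) (hτ : 0 < τ) (hG : 0 < G) :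
    (K / ((p*(p+ε*p)*(ε*p))^(2*k) * G)) * ((ε*p) * (p * ( ((p*r)*(p*(1+ε*τ))*E1 + (p*s)*(ε*p*τ)*E2)
      * ((p*(r+ε))*(ε*p*t)) * X *
      ((p*s)*(p*(1+ε*τ))*(p*r)*(ε*p*τ)*(p*(r+ε))*(ε*p*t))^(k-1))))
    = K/G * ((1+ε*τ)^k/(1+ε*τ) * (((1+ε)^2)^k)⁻¹) * (t^k * s^(k-1) * r^(k-1) * τ^(k-1))
      * (X * ((r+ε)^k*(r*(1+ε*τ)*E1+ε*s*τ*E2))) := by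
  have h1 : (p*(p+ε*p)*(ε*p))^(2*k) = (p^6*ε^2)^k * ((1+ε)^2)^k := by
    rw [← mul_rpow (by positivity) (by positivity), rpow_mul (by positivity), rpow_two]
    congr 1; ring
  have h2 : ((p*s)*(p*(1+ε*τ))*(p*r)*(ε*p*τ)*(p*(r+ε))*(ε*p*t))^(k-1)
      = (p^6*ε^2)^k * s^k * (1+ε*τ)^k * r^k * τ^k * (r+ε)^k * t^k /
        ((p^6*ε^2) * s * (1+ε*τ) * r * τ * (r+ε) * t) := by
    rw [rpow_sub_one (by positivity)]
    rw [show ((p*s)*(p*(1+ε*τ))*(p*r)*(ε*p*τ)*(p*(r+ε))*(ε*p*t)) = (p^6*ε^2) * s * (1+ε*τ) * r * τ * (r+ε) * t by ring]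
    rw [mul_rpow (by positivity) (by positivity), mul_rpow (by positivity) (by positivity),
      mul_rpow (by positivity) (by positivity), mul_rpow (by positivity) (by positivity),
      mul_rpow (by positivity) (by positivity), mul_rpow (by positivity) (by positivity)]
  rw [h1, h2, rpow_sub_one hs.ne', rpow_sub_one hr.ne', rpow_sub_one hτ.ne']
  have p1 : 0 < (p^6*ε^2)^k := by positivity
  have p2 : 0 < ((1+ε)^2)^k := by positivity
  have p3 : 0 < 1+ε*τ := by positivity
  generalize (p^6*ε^2)^k = a1 at *
  generalize ((1+ε)^2)^k = a2 at *
  generalize (1+ε*τ)^k = a3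
  generalize (r+ε)^k = a4
  generalize s^k = a5
  generalize t^k = a6
  generalize r^k = a7
  generalize τ^k = a8
  have p4 : 0 < r + ε := by positivity
  generalize 1 + ε * τ = m at *
  generalize r + ε = n at *
  rw [show p * r * (p * m) * E1 + p * s * (ε * p * τ) * E2 = p^2 * (r * m * E1 + ε * s * τ * E2) by ring]
  generalize r * m * E1 + ε * s * τ * E2 = b
  have q1 := hp.ne'
  have q2 := hε.ne'
  have q3 := hs.ne'
  have q4 := ht.ne'
  have q5 := hr.ne'
  have q6 := hτ.ne'
  have q7 := hG.ne'
  have q8 := p1.ne'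
  have q9 := p2.ne'
  have q10 := p3.ne'
  have q11 := p4.ne'
  clear hp hε hs ht hr hτ hG p1 p2 p3 p4 h1 h2
  field_simp

lemma m_bd (k ε τ : ℝ) (hk : 0 < k) (hε : 0 < ε) (hε1 : ε ≤ 1) (hτ : 0 < τ) (hτ1 : τ < 1) :
    1/2 * ((4:ℝ)^k)⁻¹ ≤ (1+ε*τ)^k/(1+ε*τ) * (((1+ε)^2)^k)⁻¹ ∧
    (1+ε*τ)^k/(1+ε*τ) * (((1+ε)^2)^k)⁻¹ ≤ 2^k := by
  have h0 : 0 < ε*τ := by positivity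
  have h1 : ε*τ ≤ 1 := by nlinarith
  have h2 : (1:ℝ) ≤ (1+ε*τ)^k := one_le_rpow (by linarith) hk.le
  have h3 : (1+ε*τ)^k ≤ 2^k := by gcongr; linarith
  have h4 : ((1+ε)^2)^k ≤ (4:ℝ)^k := by gcongr; nlinarith
  have h5 : 1 ≤ ((1+ε)^2)^k := one_le_rpow (by nlinarith) hk.le
  constructor
  · gcongr; linarith
  · calc _ ≤ (2:ℝ)^k/1 * 1 := by
          gcongr
          · linarith
          · exact inv_le_one_of_one_le₀ h5
      _ = _ := by ring

lemma core_up (k ε r s t B N : ℝ) (hk : 0 < k) (hε : 0 < ε) (hε1 : ε ≤ 1) (hr : 0 < r) (hr1 : r < 1)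
    (hs : 0 < s) (ht : 0 < t) (ht1 : t < 1) (hB : 0 ≤ B) (hN : 0 ≤ N) (hNB : ε * N ≤ 2 * B) :
    (r+ε)^k*(2 * r * ((1+N*(r+ε*(1-t)))⁻¹)^(k+1)+ε*s*((1+N*(r+ε*(1-t)))⁻¹)^k) ≤
    4 * 2^k * (1+2*B*t)^(k+1) * (((1+N*(1+ε))⁻¹)^(k+1) + ε*s*((1+N*(1+ε))⁻¹)^k) := by
  have ht2 : 0 < 1 - t := by linarith
  have hL : 0 < 1+N*(1+ε) := by positivity
  have hD : 0 < 1+N*(r+ε*(1-t)) := by positivity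
  have hw : 1 ≤ 1+2*B*t := by have : 0 ≤ B*t := by positivity
                              linarith
  have hDw : 1+N*(r+ε) ≤ (1+N*(r+ε*(1-t))) * (1+2*B*t) := by
    have e1 : ε*N*t ≤ 2*B*t := by gcongr
    have e2 : 0 ≤ N*(r+ε*(1-t)) * (2*B*t) := by positivity
    nlinarith
  have hU : 0 < 1+N*(r+ε) := by positivity
  have b1 : (r+ε) * (1+N*(r+ε*(1-t)))⁻¹ ≤ (1+2*B*t) * (2 * (1+N*(1+ε))⁻¹) := by
    rw [← div_eq_mul_inv, div_le_iff₀ hD]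
    rw [show (1+2*B*t) * (2 * (1+N*(1+ε))⁻¹) * (1+N*(r+ε*(1-t))) = (2 * ((1+N*(r+ε*(1-t))) * (1+2*B*t))) / (1+N*(1+ε)) by field_simp]
    rw [le_div_iff₀ hL]
    have : (r+ε) * (1+N*(1+ε)) ≤ 2 * (1+N*(r+ε)) := by
      have : 0 ≤ N * (r+ε) := by positivity
      nlinarith
    linarith
  have b2 : r * (1+N*(r+ε*(1-t)))⁻¹ ≤ (1+2*B*t) * (2 * (1+N*(1+ε))⁻¹) := by
    refine le_trans ?_ b1
    gcongr; linarith
  set d := (1+N*(r+ε*(1-t)))⁻¹ with hd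
  have hd0 : 0 < d := by positivity
  set ℓ := (1+N*(1+ε))⁻¹ with hl
  have hl0 : 0 < ℓ := by positivity
  set w := 1+2*B*t with hw'
  have hw0 : 0 < w := by linarith
  rw [rpow_add_one hd0.ne', rpow_add_one hl0.ne', rpow_add_one hw0.ne']
  have b3 : (r+ε)^k * d^k ≤ w^k * (2^k * ℓ^k) := by
    rw [← mul_rpow (by positivity) (by positivity), ← mul_rpow (by positivity) (by positivity), ← mul_rpow (by positivity) (by positivity)]
    exact rpow_le_rpow (by positivity) b1 hk.le
  calc _ = ((r+ε)^k * d^k) * (2 * (r * d) + ε * s) := by ring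
    _ ≤ (w^k * (2^k * ℓ^k)) * (2 * (w * (2*ℓ)) + 4 * w * (ε * s)) := by
        have h7 : ε * s ≤ 4 * w * (ε * s) := by nlinarith [mul_pos hε hs]
        refine mul_le_mul b3 (by linarith) (by positivity) (by positivity)
    _ = _ := by ring

lemma core_lo (k ε r s τ N : ℝ) (hk : 0 < k) (hε : 0 < ε) (hr : 0 < r) (hr1 : r < 1)
    (hs : 0 < s) (hτ : 0 < τ) (hτ1 : τ < 1) (hN : 0 ≤ N) :
    r^k * (r * ((1+N*(1+ε))⁻¹)^(k+1) + ε*s*τ*((1+N*(1+ε))⁻¹)^k) ≤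
    (r+ε)^k*(r * (1+ε*τ) * ((1+N*(r+ε*τ))⁻¹)^(k+1)+ε*s*τ*((1+N*(r+ε*τ))⁻¹)^k) := by
  have h : (1+N*(1+ε))⁻¹ ≤ (1+N*(r+ε*τ))⁻¹ := by
    gcongr
    nlinarith
  have h1 : r ≤ r * (1+ε*τ) := by nlinarith [mul_pos hr (mul_pos hε hτ)]
  gcongr
  linarith

lemma comb (A B N ε : ℝ) (hA : 0 ≤ A) (hN : 0 ≤ N) (hAB : A ≤ B) (hε : 0 < ε) (hε1 : ε ≤ 1)
    (h1 : B ≤ ε * N) (h2 : ε * N ≤ 2 * B) :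
    (1+B)⁻¹ * ((1+N*(1+ε))⁻¹ + ε * (1+A)⁻¹) ≤ 6 * ((1+A)⁻¹ * (1+N*(1+ε))⁻¹) ∧
    (1+A)⁻¹ * (1+N*(1+ε))⁻¹ ≤ (1+B)⁻¹ * ((1+N*(1+ε))⁻¹ + ε * (1+A)⁻¹) := by
  have hB : 0 ≤ B := hA.trans hAB
  have a1 : 0 < 1 + A := by positivity
  have a2 : 0 < 1 + B := by positivity
  have a3 : 0 < 1 + N*(1+ε) := by positivity
  have e1 : (1+B)⁻¹ * ((1+N*(1+ε))⁻¹ + ε * (1+A)⁻¹) = ((1+A) + ε * (1+N*(1+ε))) / ((1+B)*(1+A)*(1+N*(1+ε))) := by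
    field_simp
  have e2 : (1+A)⁻¹ * (1+N*(1+ε))⁻¹ = (1+B) / ((1+B)*(1+A)*(1+N*(1+ε))) := by field_simp
  have hm : 0 ≤ ε * N * ε := by positivity
  have hm2 : ε * N * ε ≤ ε * N := mul_le_of_le_one_right (by positivity) hε1
  rw [e1, e2, ← mul_div_assoc]
  constructor
  · refine div_le_div_of_nonneg_right ?_ (by positivity); nlinarith
  · refine div_le_div_of_nonneg_right ?_ (by positivity); nlinarith

lemma pt_up (k ε r s t A B N C C3 m K0 E1 E2 X Em y : ℝ) (hk : 0 < k) (hε : 0 < ε) (hε1 : ε ≤ 1)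
    (hrs : r = 1 - s) (hs : 0 < s) (hs1 : s < 1) (ht : 0 < t) (ht1 : t < 1) (hB : 0 ≤ B) (hN : 0 ≤ N)
    (hNB : ε * N ≤ 2 * B) (hC : 0 < C) (hC3 : 0 < C3) (hK0 : 0 < K0) (hX : 0 < X) (hEm : 0 < Em)
    (hm0 : 0 ≤ m) (hm : m ≤ 2^k)
    (hE1 : E1 ≤ C * (exp y * ((1+N*(r+ε*(1-t)))⁻¹)^(k+1)))
    (hE2 : E2 ≤ C * (exp y * ((1+N*(r+ε*(1-t)))⁻¹)^k))
    (hXy : X * exp y = Em * exp (-(A*s)) * exp (-(B*t)))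
    (hE10 : 0 ≤ E1) (hE20 : 0 ≤ E2)
    (h3 : (1+2*B*t)^(k+1) ≤ C3 * exp ((2*B*t)/4)) :
    K0 * m * (t^k * s^(k-1) * r^(k-1) * (1-t)^(k-1))
      * (X * ((r+ε)^k*(r*(1+ε*(1-t))*E1+ε*s*(1-t)*E2))) ≤
    (K0 * 2^k * C * (4 * 2^k) * C3) * Em * ((1+N*(1+ε))⁻¹)^(k+1) * (jf (k+1) k (B/2) t * jf k k A s)
    + (K0 * 2^k * C * (4 * 2^k) * C3) * Em * (ε * ((1+N*(1+ε))⁻¹)^k) * (jf (k+1) k (B/2) t * jf (k+1) k A s) := by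
  have hr : 0 < r := by linarith
  have hr1 : r < 1 := by linarith
  have hτ : 0 < 1 - t := by linarith
  have hcu := core_up k ε r s t B N hk hε hε1 hr hr1 hs ht ht1 hB hN hNB
  have hD : 0 < (1+N*(r+ε*(1-t)))⁻¹ := by positivity
  have hL : 0 < (1+N*(1+ε))⁻¹ := by positivity
  have hP1 := rpow_pos_of_pos hD (k+1)
  have hP2 := rpow_pos_of_pos hD k
  have hP3 := rpow_pos_of_pos hL (k+1)
  have hP4 := rpow_pos_of_pos hL k
  have hP5 : 0 < (r+ε)^k := by positivity
  have g1 : r*(1+ε*(1-t))*E1+ε*s*(1-t)*E2 ≤ C * exp y * (2 * r * ((1+N*(r+ε*(1-t)))⁻¹)^(k+1)+ε*s*((1+N*(r+ε*(1-t)))⁻¹)^k) := by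
    have e1 : ε * (1-t) ≤ 1 := by nlinarith
    calc _ ≤ r*(1+ε*(1-t))*(C * (exp y * ((1+N*(r+ε*(1-t)))⁻¹)^(k+1)))+ε*s*(1-t)*(C * (exp y * ((1+N*(r+ε*(1-t)))⁻¹)^k)) := by gcongr
      _ ≤ r*(1+1)*(C * (exp y * ((1+N*(r+ε*(1-t)))⁻¹)^(k+1)))+ε*s*1*(C * (exp y * ((1+N*(r+ε*(1-t)))⁻¹)^k)) := by
          gcongr; linarith
      _ = _ := by ring
  have hY : 0 ≤ r*(1+ε*(1-t))*E1+ε*s*(1-t)*E2 := by positivity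
  generalize ((1+N*(r+ε*(1-t)))⁻¹)^(k+1) = d1 at *
  generalize ((1+N*(r+ε*(1-t)))⁻¹)^k = d0 at *
  generalize ((1+N*(1+ε))⁻¹)^(k+1) = ℓ1 at *
  generalize ((1+N*(1+ε))⁻¹)^k = ℓ0 at *
  generalize r*(1+ε*(1-t))*E1+ε*s*(1-t)*E2 = Y at *
  have g2 : X * ((r+ε)^k * Y) ≤ C * (4 * 2^k) * C3 * Em * exp (-(A*s)) * exp (-(B/2*t)) * (ℓ1 + ε*s*ℓ0) := by
    calc _ ≤ X * ((r+ε)^k * (C * exp y * (2 * r * d1+ε*s*d0))) := by gcongr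
      _ = C * (X * exp y) * ((r+ε)^k * (2 * r * d1+ε*s*d0)) := by ring
      _ ≤ C * (X * exp y) * (4 * 2^k * (1+2*B*t)^(k+1) * (ℓ1 + ε*s*ℓ0)) := by gcongr
      _ ≤ C * (X * exp y) * (4 * 2^k * (C3 * exp ((2*B*t)/4)) * (ℓ1 + ε*s*ℓ0)) := by gcongr
      _ = C * (4 * 2^k) * C3 * Em * exp (-(A*s)) * (exp (-(B*t)) * exp ((2*B*t)/4)) * (ℓ1 + ε*s*ℓ0) := by
          rw [hXy]; ring
      _ = _ := by
          rw [← exp_add]; congr 3; ring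
  have hQ : 0 ≤ t^k * s^(k-1) * r^(k-1) * (1-t)^(k-1) := by positivity
  calc _ ≤ K0 * 2^k * (t^k * s^(k-1) * r^(k-1) * (1-t)^(k-1))
      * (C * (4 * 2^k) * C3 * Em * exp (-(A*s)) * exp (-(B/2*t)) * (ℓ1 + ε*s*ℓ0)) := by
        refine mul_le_mul ?_ g2 ?_ (by positivity)
        · gcongr
        · positivity
    _ = _ := by
        unfold jf
        rw [add_sub_cancel_right, ← hrs]
        have : s^k = s^(k-1)*s := by rw [← rpow_add_one hs.ne']; simp
        rw [this]; ring

lemma pt_lo (k ε r s t A B N C m K0 E1 E2 X Em y : ℝ) (hk : 0 < k) (hε : 0 < ε)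
    (hrs : r = 1 - s) (hs : 0 < s) (hs1 : s < 1) (ht : 0 < t) (ht1 : t < 1) (hN : 0 ≤ N)
    (hC : 0 < C) (hK0 : 0 < K0) (hX : 0 < X) (hEm : 0 < Em)
    (hm : 1/2 * ((4:ℝ)^k)⁻¹ ≤ m)
    (hE1 : C * (exp y * ((1+N*(r+ε*(1-t)))⁻¹)^(k+1)) ≤ E1)
    (hE2 : C * (exp y * ((1+N*(r+ε*(1-t)))⁻¹)^k) ≤ E2)
    (hXy : X * exp y = Em * exp (-(A*s)) * exp (-(B*t))) :
    (K0 * (1/2 * ((4:ℝ)^k)⁻¹) * C) * Em * ((1+N*(1+ε))⁻¹)^(k+1) * (jf (k+1) k B t * jf k (2*k+1) A s)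
    + (K0 * (1/2 * ((4:ℝ)^k)⁻¹) * C) * Em * (ε * ((1+N*(1+ε))⁻¹)^k) * (jf (k+1) (k+1) B t * jf (k+1) (2*k) A s) ≤
    K0 * m * (t^k * s^(k-1) * r^(k-1) * (1-t)^(k-1))
      * (X * ((r+ε)^k*(r*(1+ε*(1-t))*E1+ε*s*(1-t)*E2))) := by
  have hr : 0 < r := by linarith
  have hr1 : r < 1 := by linarith
  have hτ : 0 < 1 - t := by linarith
  have hcl := core_lo k ε r s (1-t) N hk hε hr hr1 hs hτ (by linarith) hN
  have hD : 0 < (1+N*(r+ε*(1-t)))⁻¹ := by positivity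
  have hL : 0 < (1+N*(1+ε))⁻¹ := by positivity
  have hP1 := rpow_pos_of_pos hD (k+1)
  have hP2 := rpow_pos_of_pos hD k
  have hP3 := rpow_pos_of_pos hL (k+1)
  have hP4 := rpow_pos_of_pos hL k
  have hP5 : 0 < (r+ε)^k := by positivity
  have hP6 : 0 < r^k := by positivity
  have g1 : C * exp y * (r*(1+ε*(1-t)) * ((1+N*(r+ε*(1-t)))⁻¹)^(k+1)+ε*s*(1-t)*((1+N*(r+ε*(1-t)))⁻¹)^k) ≤ r*(1+ε*(1-t))*E1+ε*s*(1-t)*E2 := by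
    calc _ = r*(1+ε*(1-t))*(C * (exp y * ((1+N*(r+ε*(1-t)))⁻¹)^(k+1)))+ε*s*(1-t)*(C * (exp y * ((1+N*(r+ε*(1-t)))⁻¹)^k)) := by ring
      _ ≤ _ := by gcongr
  generalize ((1+N*(r+ε*(1-t)))⁻¹)^(k+1) = d1 at *
  generalize ((1+N*(r+ε*(1-t)))⁻¹)^k = d0 at *
  generalize ((1+N*(1+ε))⁻¹)^(k+1) = ℓ1 at *
  generalize ((1+N*(1+ε))⁻¹)^k = ℓ0 at *
  generalize r*(1+ε*(1-t))*E1+ε*s*(1-t)*E2 = Y at *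
  have g2 : C * Em * exp (-(A*s)) * exp (-(B*t)) * (r^k * (r * ℓ1 + ε*s*(1-t)*ℓ0)) ≤ X * ((r+ε)^k * Y) := by
    calc _ = C * (X * exp y) * (r^k * (r * ℓ1 + ε*s*(1-t)*ℓ0)) := by rw [hXy]; ring
      _ ≤ C * (X * exp y) * ((r+ε)^k * (r*(1+ε*(1-t)) * d1+ε*s*(1-t)*d0)) := by gcongr
      _ = X * ((r+ε)^k * (C * exp y * (r*(1+ε*(1-t)) * d1+ε*s*(1-t)*d0))) := by ring
      _ ≤ _ := by gcongr
  have hQ : 0 ≤ t^k * s^(k-1) * r^(k-1) * (1-t)^(k-1) := by positivity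
  calc _ = K0 * (1/2 * ((4:ℝ)^k)⁻¹) * (t^k * s^(k-1) * r^(k-1) * (1-t)^(k-1))
      * (C * Em * exp (-(A*s)) * exp (-(B*t)) * (r^k * (r * ℓ1 + ε*s*(1-t)*ℓ0))) := by
        unfold jf
        rw [add_sub_cancel_right, add_sub_cancel_right, ← hrs]
        have e1 : s^k = s^(k-1)*s := by rw [← rpow_add_one hs.ne']; simp
        have e2 : (1-t)^k = (1-t)^(k-1)*(1-t) := by rw [← rpow_add_one hτ.ne']; simp
        have e3 : r^(2*k-1) = r^(k-1)*r^k := by rw [← rpow_add hr]; congr 1; ring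
        have e4 : r^(2*k) = r^(k-1)*r^k*r := by rw [← e3, ← rpow_add_one hr.ne']; simp
        rw [e1, e2, e3, e4]; ring
    _ ≤ _ := by
        have : 0 ≤ m := le_trans (by positivity) hm
        refine mul_le_mul ?_ g2 (by positivity) (by positivity)
        gcongr

noncomputable def Fint (k x1 x2 x3 l1 l2 l3 n2 n1 : ℝ) : ℝ :=
      ((n1 - l2) * (l1 - n2) * Erk1 k ((x1 - x2) / 2) (n1 - n2)
        + (l1 - n1) * (l2 - n2) * Erk1 k (-(x1 - x2) / 2) (n1 - n2))
      * ((n1 - l3) * (n2 - l3)) * Real.exp ((x1 + x2 - 2 * x3) * (n1 + n2) / 2)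
      * Wk k l1 l2 l3 n1 n2

lemma EkA2_eq (k x1 x2 x3 l1 l2 l3 : ℝ) : EkA2 k x1 x2 x3 l1 l2 l3 =
    ∫ t in (0:ℝ)..1, ∫ s in (0:ℝ)..1, (3 * Real.Gamma (3 * k) / (Vlam l1 l2 l3 ^ (2 * k) * Real.Gamma k ^ 2)) *
      ((l2 - l3) * ((l1 - l2) * Fint k x1 x2 x3 l1 l2 l3 (l3 + (l2-l3)*t) (l1 - (l1-l2)*s))) := by
  simp only [intervalIntegral.integral_const_mul]
  unfold EkA2
  congr 1
  have e1 := intervalIntegral.mul_integral_comp_add_mul (a := 0) (b := 1)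
    (f := fun n2 => ∫ n1 in l2..l1, Fint k x1 x2 x3 l1 l2 l3 n2 n1) (l2 - l3) l3
  rw [show l3 + (l2-l3)*0 = l3 by ring, show l3 + (l2-l3)*1 = l2 by ring] at e1
  refine e1.symm.trans ?_
  congr 1
  rw [← intervalIntegral.integral_const_mul]
  refine intervalIntegral.integral_congr fun t _ => ?_
  have e2 := intervalIntegral.mul_integral_comp_sub_mul (a := 0) (b := 1)
    (f := fun n1 => Fint k x1 x2 x3 l1 l2 l3 (l3 + (l2-l3)*t) n1) (l1 - l2) l1
  rw [show l1 - (l1-l2)*0 = l1 by ring, show l1 - (l1-l2)*1 = l2 by ring] at e2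
  exact e2.symm

lemma Fint_meas (k x1 x2 x3 l1 l2 l3 K q p : ℝ) : Measurable (Function.uncurry (fun t s : ℝ =>
    K * (q * (p * Fint k x1 x2 x3 l1 l2 l3 (l3 + q*t) (l1 - p*s))))) := by
  unfold Function.uncurry Fint Wk
  have h1 := (Erk1_meas k ((x1 - x2) / 2)).comp (show Measurable (fun z : ℝ × ℝ => l1 - p * z.2 - (l3 + q * z.1)) by fun_prop)
  have h2 := (Erk1_meas k (-(x1 - x2) / 2)).comp (show Measurable (fun z : ℝ × ℝ => l1 - p * z.2 - (l3 + q * z.1)) by fun_prop)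
  have key : ∀ e1 e2 : ℝ × ℝ → ℝ, Measurable e1 → Measurable e2 → Measurable (fun z : ℝ × ℝ =>
      K * (q * (p * (((l1 - p * z.2 - l2) * (l1 - (l3 + q * z.1)) * e1 z +
                    (l1 - (l1 - p * z.2)) * (l2 - (l3 + q * z.1)) * e2 z) *
                  ((l1 - p * z.2 - l3) * (l3 + q * z.1 - l3)) *
                rexp ((x1 + x2 - 2 * x3) * (l1 - p * z.2 + (l3 + q * z.1)) / 2) *
              ((l1 - (l1 - p * z.2)) * (l1 - (l3 + q * z.1)) * (l1 - p * z.2 - l2) * (l2 - (l3 + q * z.1)) *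
                (l1 - p * z.2 - l3) * (l3 + q * z.1 - l3)) ^ (k - 1))))) := by
    intro e1 e2 h1 h2
    fun_prop
  exact key _ _ h1 h2

lemma F_eq (k p ε l1 l2 l3 x1 x2 x3 s t : ℝ) (hp : 0 < p) (hε : 0 < ε) (hk : 0 < k)
    (hl2 : l1 - l2 = p) (hl3 : l2 - l3 = ε * p)
    (hs : s ∈ Ioo (0:ℝ) 1) (ht : t ∈ Ioo (0:ℝ) 1) :
    (3 * Real.Gamma (3 * k) / (Vlam l1 l2 l3 ^ (2 * k) * Real.Gamma k ^ 2)) *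
      ((l2 - l3) * ((l1 - l2) * Fint k x1 x2 x3 l1 l2 l3 (l3 + (l2-l3)*t) (l1 - (l1-l2)*s))) =
    3 * Real.Gamma (3 * k) / Real.Gamma k ^ 2 *
      ((1+ε*(1-t))^k/(1+ε*(1-t)) * (((1+ε)^2)^k)⁻¹) * (t^k * s^(k-1) * (1-s)^(k-1) * (1-t)^(k-1))
      * (Real.exp ((x1 + x2 - 2 * x3) * ((l1 - p*s) + (l3 + ε*p*t)) / 2) *
        (((1-s)+ε)^k*((1-s)*(1+ε*(1-t))*(Erk1 k ((x1 - x2) / 2) (p*((1-s)+ε*(1-t))))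
          +ε*s*(1-t)*(Erk1 k (-(x1 - x2) / 2) (p*((1-s)+ε*(1-t))))))) := by
  have h1 := hs.1; have h2 := hs.2; have h3 := ht.1; have h4 := ht.2
  rw [← core_id k p ε s t (1-s) (1-t) _ _ _ _ _ hp hε h1 h3 (by linarith) (by linarith)
    (by have := Gamma_pos_of_pos hk; positivity)]
  unfold Fint Wk Vlam
  have e2 : l2 = l1 - p := by linarith
  have e3 : l3 = l1 - p - ε * p := by linarith
  subst e2
  subst e3
  have f1 : l1 - (l1 - p) = p := by ring
  have f2 : l1 - p - (l1 - p - ε*p) = ε*p := by ring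
  have f3 : l1 - (l1 - p - ε*p) = p + ε*p := by ring
  have f4 : l1 - p*s - (l1 - p) = p*(1-s) := by ring
  have f5 : l1 - (l1 - p - ε*p + ε*p*t) = p*(1+ε*(1-t)) := by ring
  have f6 : l1 - p*s - (l1 - p - ε*p + ε*p*t) = p*((1-s)+ε*(1-t)) := by ring
  have f7 : l1 - (l1 - p*s) = p*s := by ring
  have f8 : l1 - p - (l1 - p - ε*p + ε*p*t) = ε*p*(1-t) := by ring
  have f9 : l1 - p*s - (l1 - p - ε*p) = p*((1-s)+ε) := by ring
  have f10 : l1 - p - ε*p + ε*p*t - (l1 - p - ε*p) = ε*p*t := by ring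
  rw [f1, f2, f3, f4, f5, f6, f7, f8, f9, f10]

set_option maxHeartbeats 2000000 in
lemma main_aux (k : ℝ) (hk : 0 < k) :
    ∃ cs Cb : ℝ, 0 < cs ∧ 0 < Cb ∧ ∀ l1 l2 l3 x1 x2 x3 p ε a b : ℝ,
      l1 + l2 + l3 = 0 → l1 - l2 = p → l2 - l3 = ε * p → x2 - x3 = a → x3 - x1 = b →
      0 < p → 0 < ε → ε ≤ 1 → 0 ≤ a → 0 ≤ b → p * a ≤ ε * p * b →
      cs * (Real.exp (l1 * x2 + l2 * x3 + l3 * x1) * (((1+p*a)⁻¹)^(k+1) * ((1+ε*p*b)⁻¹)^k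
        * ((1+p*(a+b)*(1+ε))⁻¹)^(k+1))) ≤ EkA2 k x1 x2 x3 l1 l2 l3 ∧
      EkA2 k x1 x2 x3 l1 l2 l3 ≤ Cb * (Real.exp (l1 * x2 + l2 * x3 + l3 * x1) * (((1+p*a)⁻¹)^(k+1) * ((1+ε*p*b)⁻¹)^k
        * ((1+p*(a+b)*(1+ε))⁻¹)^(k+1))) := by
  obtain ⟨c, C, hc, hC, hE⟩ := Erk1_bd k hk
  obtain ⟨C3, hC3, hpe⟩ := pow_exp_bd (k+1) (by linarith)
  obtain ⟨U1, hU1, u1⟩ := J_upper (k+1) k (by linarith) hk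
  obtain ⟨U2, hU2, u2⟩ := J_upper k k hk hk
  obtain ⟨L1, hL1, b1⟩ := J_lower (k+1) k (by linarith) hk
  obtain ⟨L2, hL2, b2⟩ := J_lower k (2*k+1) hk (by linarith)
  obtain ⟨L3, hL3, b3⟩ := J_lower (k+1) (k+1) (by linarith) (by linarith)
  obtain ⟨L4, hL4, b4⟩ := J_lower (k+1) (2*k) (by linarith) (by linarith)
  have hK0 : 0 < 3 * Real.Gamma (3 * k) / Real.Gamma k ^ 2 := by
    have := Gamma_pos_of_pos hk
    have := Gamma_pos_of_pos (show 0 < 3 * k by linarith)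
    positivity
  set K0 := 3 * Real.Gamma (3 * k) / Real.Gamma k ^ 2 with hK0'
  set cl := K0 * (1/2 * ((4:ℝ)^k)⁻¹) * c with hcl
  set cu := K0 * 2^k * C * (4 * 2^k) * C3 with hcu
  have hcl0 : 0 < cl := by positivity
  have hcu0 : 0 < cu := by positivity
  refine ⟨cl * min (L1*L2) (L3*L4), cu * (U1 * 2^(k+1) * max U1 U2) * 6, by positivity, by positivity, ?_⟩
  intro l1 l2 l3 x1 x2 x3 p ε a b hsum hl2 hl3 hxa hxb hp hε hε1 ha hb hab
  set A := p * a with hA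
  set B := ε * p * b with hB
  set N := p * (a+b) with hN
  set Em := Real.exp (l1 * x2 + l2 * x3 + l3 * x1) with hEm
  have hEm0 : 0 < Em := exp_pos _
  have hA0 : 0 ≤ A := by positivity
  have hB0 : 0 ≤ B := by positivity
  have hN0 : 0 ≤ N := by positivity
  have hBN : B ≤ ε * N := by
    have : ε * N = ε * A + B := by rw [hA, hB, hN]; ring
    nlinarith
  have hNB : ε * N ≤ 2 * B := by
    have : ε * N = ε * A + B := by rw [hA, hB, hN]; ring
    nlinarith
  set ℓ := (1+N*(1+ε))⁻¹ with hℓ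
  have hℓ0 : 0 < ℓ := by positivity
  have hiA : 0 < (1+A)⁻¹ := by positivity
  have hiB : 0 < (1+B)⁻¹ := by positivity
  have pw : ∀ t ∈ Ioo (0:ℝ) 1, ∀ s ∈ Ioo (0:ℝ) 1, 
      (cl * Em * ℓ^(k+1) * (jf (k+1) k B t * jf k (2*k+1) A s)
        + cl * Em * (ε * ℓ^k) * (jf (k+1) (k+1) B t * jf (k+1) (2*k) A s) ≤
      (3 * Real.Gamma (3 * k) / (Vlam l1 l2 l3 ^ (2 * k) * Real.Gamma k ^ 2)) *
      ((l2 - l3) * ((l1 - l2) * Fint k x1 x2 x3 l1 l2 l3 (l3 + (l2-l3)*t) (l1 - (l1-l2)*s)))) ∧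
      (3 * Real.Gamma (3 * k) / (Vlam l1 l2 l3 ^ (2 * k) * Real.Gamma k ^ 2)) *
      ((l2 - l3) * ((l1 - l2) * Fint k x1 x2 x3 l1 l2 l3 (l3 + (l2-l3)*t) (l1 - (l1-l2)*s))) ≤
      cu * Em * ℓ^(k+1) * (jf (k+1) k (B/2) t * jf k k A s)
      + cu * Em * (ε * ℓ^k) * (jf (k+1) k (B/2) t * jf (k+1) k A s) := by
    intro t ht s hs
    rw [F_eq k p ε l1 l2 l3 x1 x2 x3 s t hp hε hk hl2 hl3 hs ht]
    have h1 := hs.1; have h2 := hs.2; have h3 := ht.1; have h4 := ht.2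
    have hr : 0 < 1 - s := by linarith
    have hτ : 0 < 1 - t := by linarith
    have hm := m_bd k ε (1-t) hk hε hε1 hτ (by linarith)
    have hy : 0 ≤ N * ((1-s)+ε*(1-t)) / 2 := by positivity
    obtain ⟨hE2, hE1⟩ := hE (-(x1-x2)/2) (p*((1-s)+ε*(1-t))) _ hy
    replace hE2 := hE2 (by rw [hN, ← hxa, ← hxb]; ring)
    obtain ⟨-, hE1⟩ := hE ((x1-x2)/2) (p*((1-s)+ε*(1-t))) _ hy
    replace hE1 := hE1 (by rw [hN, ← hxa, ← hxb]; ring)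
    rw [mul_div_cancel₀ _ (two_ne_zero)] at hE1 hE2
    have hXy : Real.exp ((x1 + x2 - 2 * x3) * ((l1 - p*s) + (l3 + ε*p*t)) / 2) * Real.exp (N * ((1-s)+ε*(1-t)) / 2)
        = Em * exp (-(A*s)) * exp (-(B*t)) := by
      rw [hEm, ← exp_add, ← exp_add, ← exp_add]
      congr 1
      have z1 : x2 = x3 + a := by linarith
      have z2 : x1 = x3 - b := by linarith
      have z3 : l1 = l2 + p := by linarith
      have z4 : l3 = l2 - ε*p := by linarith
      rw [hA, hB, hN, z1, z2]
      rw [z3, z4] at hsum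
      rw [z3, z4]
      linear_combination (-x3) * hsum
    constructor
    · exact pt_lo k ε (1-s) s t A B N c _ K0 _ _ _ Em _ hk hε rfl h1 h2 h3 h4 hN0 hc hK0 (exp_pos _) hEm0 hm.1
        hE1.1 hE2.1 hXy
    · refine pt_up k ε (1-s) s t A B N C C3 _ K0 _ _ _ Em _ hk hε hε1 rfl h1 h2 h3 h4 hB0 hN0 hNB hC hC3 hK0
        (exp_pos _) hEm0 (le_trans (by positivity) hm.1) hm.2 hE1.2 hE2.2 hXy (le_trans (by positivity) hE1.1)
        (le_trans (by positivity) hE2.1) (hpe _ (by positivity))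
  have hk1 : 0 < k + 1 := by linarith
  have td := two_d (fun t s => (3 * Real.Gamma (3 * k) / (Vlam l1 l2 l3 ^ (2 * k) * Real.Gamma k ^ 2)) *
      ((l2 - l3) * ((l1 - l2) * Fint k x1 x2 x3 l1 l2 l3 (l3 + (l2-l3)*t) (l1 - (l1-l2)*s))))
      (Fint_meas _ _ _ _ _ _ _ _ _ _) (jf (k+1) k B) (jf k (2*k+1) A) (jf (k+1) (k+1) B) (jf (k+1) (2*k) A)
      (jf (k+1) k (B/2)) (jf k k A) (jf (k+1) k (B/2)) (jf (k+1) k A)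
      (cl * Em * ℓ^(k+1)) (cl * Em * (ε * ℓ^k)) (cu * Em * ℓ^(k+1)) (cu * Em * (ε * ℓ^k))
      (jf_int _ _ _ hk1 hk hB0) (jf_int _ _ _ hk (by linarith) hA0)
      (jf_int _ _ _ hk1 hk1 hB0) (jf_int _ _ _ hk1 (by linarith) hA0)
      (jf_int _ _ _ hk1 hk (by linarith)) (jf_int _ _ _ hk hk hA0)
      (jf_int _ _ _ hk1 hk (by linarith)) (jf_int _ _ _ hk1 hk hA0)
      (fun t ht s hs => by
        refine le_trans ?_ (pw t ht s hs).1
        have j1 := jf_nonneg (k+1) k B t ht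
        have j2 := jf_nonneg k (2*k+1) A s hs
        have j3 := jf_nonneg (k+1) (k+1) B t ht
        have j4 := jf_nonneg (k+1) (2*k) A s hs
        positivity)
      (fun t ht s hs => (pw t ht s hs).1) (fun t ht s hs => (pw t ht s hs).2)
  rw [← EkA2_eq] at td
  obtain ⟨cb1, cb2⟩ := comb A B N ε hA0 hN0 hab hε hε1 hBN hNB
  rw [← hℓ] at cb1 cb2
  have r1 : ℓ^(k+1) = ℓ^k * ℓ := rpow_add_one hℓ0.ne' k
  have r2 : ((1+A)⁻¹)^(k+1) = ((1+A)⁻¹)^k * (1+A)⁻¹ := rpow_add_one hiA.ne' k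
  have r3 : ((1+B)⁻¹)^(k+1) = ((1+B)⁻¹)^k * (1+B)⁻¹ := rpow_add_one hiB.ne' k
  have s1 : 0 < ((1+A)⁻¹)^k := by positivity
  have s2 : 0 < ((1+B)⁻¹)^k := by positivity
  have s3 : 0 < ℓ^k := by positivity
  constructor
  · refine le_trans ?_ td.1
    have v1 := b1 B hB0
    have v2 := b2 A hA0
    have v3 := b3 B hB0
    have v4 := b4 A hA0
    calc cl * min (L1*L2) (L3*L4) * (Em * (((1+A)⁻¹)^(k+1) * ((1+B)⁻¹)^k * ℓ^(k+1)))
        = cl * min (L1*L2) (L3*L4) * Em * (((1+A)⁻¹)^k * ((1+B)⁻¹)^k * ℓ^k) * ((1+A)⁻¹ * ℓ) := by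
          rw [r1, r2]; ring
      _ ≤ cl * min (L1*L2) (L3*L4) * Em * (((1+A)⁻¹)^k * ((1+B)⁻¹)^k * ℓ^k) * ((1+B)⁻¹ * (ℓ + ε * (1+A)⁻¹)) := by
          gcongr
      _ = cl * Em * ℓ^(k+1) * (min (L1*L2) (L3*L4) * (((1+B)⁻¹)^(k+1) * ((1+A)⁻¹)^k))
          + cl * Em * (ε * ℓ^k) * (min (L1*L2) (L3*L4) * (((1+B)⁻¹)^(k+1) * ((1+A)⁻¹)^(k+1))) := by
          rw [r1, r2, r3]; ring
      _ ≤ cl * Em * ℓ^(k+1) * ((L1*L2) * (((1+B)⁻¹)^(k+1) * ((1+A)⁻¹)^k))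
          + cl * Em * (ε * ℓ^k) * ((L3*L4) * (((1+B)⁻¹)^(k+1) * ((1+A)⁻¹)^(k+1))) := by
          gcongr
          · exact min_le_left _ _
          · exact min_le_right _ _
      _ = cl * Em * ℓ^(k+1) * ((L1 * ((1+B)⁻¹)^(k+1)) * (L2 * ((1+A)⁻¹)^k))
          + cl * Em * (ε * ℓ^k) * ((L3 * ((1+B)⁻¹)^(k+1)) * (L4 * ((1+A)⁻¹)^(k+1))) := by ring
      _ ≤ _ := by
          gcongr
          · exact le_trans (by positivity) v1
          · exact le_trans (by positivity) v3
  · refine le_trans td.2 ?_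
    have v1 := u1 (B/2) (by linarith)
    have v2 := u2 A hA0
    have v3 := u1 A hA0
    have hB2 : ((1+B/2)⁻¹)^(k+1) ≤ 2^(k+1) * ((1+B)⁻¹)^(k+1) := by
      rw [← mul_rpow (by positivity) (by positivity)]
      refine rpow_le_rpow (by positivity) ?_ hk1.le
      rw [← div_eq_mul_inv, ← one_div, div_le_div_iff₀ (by positivity) (by positivity)]
      linarith
    have v1' : ∫ t in Ioo (0:ℝ) 1, jf (k+1) k (B/2) t ≤ U1 * (2^(k+1) * ((1+B)⁻¹)^(k+1)) :=
      v1.trans (by gcongr)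
    have n1 : 0 ≤ ∫ s in Ioo (0:ℝ) 1, jf k k A s := setIntegral_nonneg measurableSet_Ioo (jf_nonneg _ _ _)
    have n2 : 0 ≤ ∫ s in Ioo (0:ℝ) 1, jf (k+1) k A s := setIntegral_nonneg measurableSet_Ioo (jf_nonneg _ _ _)
    have v2' : ∫ s in Ioo (0:ℝ) 1, jf k k A s ≤ max U1 U2 * ((1+A)⁻¹)^k :=
      v2.trans (by gcongr; exact le_max_right _ _)
    have v3' : ∫ s in Ioo (0:ℝ) 1, jf (k+1) k A s ≤ max U1 U2 * ((1+A)⁻¹)^(k+1) :=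
      v3.trans (by gcongr; exact le_max_left _ _)
    calc _ ≤ cu * Em * ℓ^(k+1) * ((U1 * (2^(k+1) * ((1+B)⁻¹)^(k+1))) * (max U1 U2 * ((1+A)⁻¹)^k))
          + cu * Em * (ε * ℓ^k) * ((U1 * (2^(k+1) * ((1+B)⁻¹)^(k+1))) * (max U1 U2 * ((1+A)⁻¹)^(k+1))) := by
          gcongr
      _ = cu * (U1 * 2^(k+1) * max U1 U2) * Em * (((1+A)⁻¹)^k * ((1+B)⁻¹)^k * ℓ^k) * ((1+B)⁻¹ * (ℓ + ε * (1+A)⁻¹)) := by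
          rw [r1, r2, r3]; ring
      _ ≤ cu * (U1 * 2^(k+1) * max U1 U2) * Em * (((1+A)⁻¹)^k * ((1+B)⁻¹)^k * ℓ^k) * (6 * ((1+A)⁻¹ * ℓ)) := by
          gcongr
      _ = _ := by rw [r1, r2]; ring

/-- Theorem 4.1: sharp estimate of the `A₂` Dunkl kernel. -/
theorem estimate_C231_case3 (k : ℝ) (hk : 0 < k) :
    ∃ C : ℝ, 0 < C ∧ ∀ l1 l2 l3 x1 x2 x3 : ℝ,
      l1 + l2 + l3 = 0 →
      l2 < l1 →
      l3 < l2 →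
      x1 + x2 + x3 = 0 →
      x3 ≤ x2 →
      x1 ≤ x3 →
      l2 - l3 ≤ l1 - l2 →
      (l1 - l2) * (x2 - x3) ≤ (l2 - l3) * (x3 - x1) →
      (C⁻¹ * (Real.exp (l1 * x2 + l2 * x3 + l3 * x1) /
          ((1 + (l1 - l2) * (x2 - x3)) ^ (k + 1) * (1 + (l2 - l3) * (x3 - x1)) ^ k
            * (1 + (l1 - l3) * (x2 - x1)) ^ (k + 1)))
        ≤ EkA2 k x1 x2 x3 l1 l2 l3 ∧
      EkA2 k x1 x2 x3 l1 l2 l3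
        ≤ C * (Real.exp (l1 * x2 + l2 * x3 + l3 * x1) /
          ((1 + (l1 - l2) * (x2 - x3)) ^ (k + 1) * (1 + (l2 - l3) * (x3 - x1)) ^ k
            * (1 + (l1 - l3) * (x2 - x1)) ^ (k + 1)))) := by
  obtain ⟨cs, Cb, hcs, hCb, h⟩ := main_aux k hk
  refine ⟨Cb + cs⁻¹, by positivity, ?_⟩
  intro l1 l2 l3 x1 x2 x3 hl h21 h32 hx h1 h2 h3 h4
  have hp : 0 < l1 - l2 := by linarith
  have hq : 0 < l2 - l3 := by linarith
  have hqe : l2 - l3 = (l2 - l3) / (l1 - l2) * (l1 - l2) := by field_simp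
  have hm := h l1 l2 l3 x1 x2 x3 (l1-l2) ((l2-l3)/(l1-l2)) (x2-x3) (x3-x1) hl rfl hqe rfl rfl hp
    (by positivity) ((div_le_one hp).2 h3) (by linarith) (by linarith) (by rw [← hqe]; exact h4)
  rw [← hqe] at hm
  have e3 : 1 + (l1-l2)*(x2-x3+(x3-x1))*(1+(l2-l3)/(l1-l2)) = 1 + (l1-l3)*(x2-x1) := by
    field_simp; ring
  rw [e3] at hm
  have a1 : 0 ≤ (l1-l2)*(x2-x3) := mul_nonneg hp.le (by linarith)
  have a2 : 0 ≤ (l2-l3)*(x3-x1) := mul_nonneg hq.le (by linarith)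
  have a3 : 0 ≤ (l1-l3)*(x2-x1) := mul_nonneg (by linarith) (by linarith)
  rw [inv_rpow (by positivity), inv_rpow (by positivity), inv_rpow (by positivity), ← mul_inv, ← mul_inv,
    ← div_eq_mul_inv] at hm
  have hT : 0 ≤ Real.exp (l1 * x2 + l2 * x3 + l3 * x1) /
          ((1 + (l1 - l2) * (x2 - x3)) ^ (k + 1) * (1 + (l2 - l3) * (x3 - x1)) ^ k
            * (1 + (l1 - l3) * (x2 - x1)) ^ (k + 1)) := by positivity
  constructor
  · refine le_trans (mul_le_mul_of_nonneg_right ?_ hT) hm.1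
    rw [inv_le_comm₀ (by positivity) hcs]
    linarith
  · refine hm.2.trans (mul_le_mul_of_nonneg_right ?_ hT)
    have := inv_pos.2 hcs
    linarith
end

section
/- (Theorem 4.1(iv), first case.) Uniformly over all λ ∈ C⁺ with β_λ ≤ α_λ and all X ∈ a with x3 ≥ x1 ≥ x2, one has E_k(X,λ) ≍ e^{⟨λ,X⁺⟩} / [ (1+α_λ α_{X⁺})^{k+1} (1+β_λ β_{X⁺})^{k+1} (1+γ_λ γ_{X⁺})^{k} ]. -/
open Real MeasureTheory

lemma rpow_cmp {a x c : ℝ} (e : ℝ) (ha : 0 < a) (hx : 0 < x) (hc : 1 ≤ c) (h1 : a ≤ c * x)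
    (h2 : x ≤ c * a) : (c ^ |e|)⁻¹ * a ^ e ≤ x ^ e ∧ x ^ e ≤ c ^ |e| * a ^ e := by
  have hc0 : 0 < c := by linarith
  have key : ∀ a x : ℝ, 0 < a → 0 < x → a ≤ c * x → x ≤ c * a → x ^ e ≤ c ^ |e| * a ^ e := by
    intro a x ha hx h1 h2
    rcases le_total 0 e with he | he
    · rw [abs_of_nonneg he, ← mul_rpow hc0.le ha.le]
      exact rpow_le_rpow hx.le h2 he
    · rw [abs_of_nonpos he, rpow_neg hc0.le, ← inv_rpow hc0.le, ← mul_rpow (by positivity) ha.le]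
      apply rpow_le_rpow_of_nonpos (by positivity) _ he
      rw [inv_mul_le_iff₀ hc0]; exact h1
  refine ⟨?_, key a x ha hx h1 h2⟩
  rw [inv_mul_le_iff₀ (by positivity)]
  exact key x a hx ha h2 h1

lemma exp_dom (k d : ℝ) (hk : 0 < k) (hd : 0 < d) :
    ∃ C : ℝ, 0 < C ∧ ∀ t : ℝ, 0 ≤ t → (2 + t) ^ k ≤ C * exp (d * t) := by
  refine ⟨(k / d) ^ k * exp (2 * d), by positivity, fun t ht => ?_⟩
  have h : 2 + t ≤ (k / d) * exp (d * (2 + t) / k) := by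
    have := add_one_le_exp (d * (2 + t) / k)
    calc 2 + t = (k / d) * (d * (2 + t) / k) := by field_simp
      _ ≤ _ := by gcongr; linarith
  calc (2 + t) ^ k ≤ ((k / d) * exp (d * (2 + t) / k)) ^ k := rpow_le_rpow (by linarith) h hk.le
    _ = (k / d) ^ k * exp (2 * d) * exp (d * t) := by
      rw [mul_rpow (by positivity) (by positivity), ← exp_mul, mul_assoc, ← exp_add]
      congr 2; field_simp

noncomputable def bl (u w m a p s : ℝ) : ℝ := exp (-(m * p * s)) * s ^ (u - 1) * (a - s) ^ (w - 1)

lemma bl_int {u w : ℝ} (m p : ℝ) {a : ℝ} (hu : 0 < u) (hw : 0 < w) (ha : 0 < a) :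
    IntervalIntegrable (bl u w m a p) volume 0 a := by
  apply IntervalIntegrable.trans (b := a / 2)
  · have h : IntervalIntegrable (fun s : ℝ => s ^ (u - 1)) volume 0 (a/2) :=
      intervalIntegral.intervalIntegrable_rpow' (by linarith)
    have := h.continuousOn_mul (g := fun s => exp (-(m * p * s)) * (a - s) ^ (w - 1)) (by
      rw [Set.uIcc_of_le (by linarith)]
      apply ContinuousOn.mul (by fun_prop)
      apply ContinuousOn.rpow_const (by fun_prop)
      intro x hx; left; have := hx.2; linarith)
    convert this using 2 with s
    unfold bl; ring
  · have h0 : IntervalIntegrable (fun s : ℝ => s ^ (w - 1)) volume (a/2) 0 :=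
      intervalIntegral.intervalIntegrable_rpow' (by linarith)
    have h : IntervalIntegrable (fun s : ℝ => (a - s) ^ (w - 1)) volume (a/2) a := by
      have := h0.comp_sub_left a
      convert this using 1 <;> ring
    have := h.continuousOn_mul (g := fun s => exp (-(m * p * s)) * s ^ (u - 1)) (by
      rw [Set.uIcc_of_le (by linarith)]
      apply ContinuousOn.mul (by fun_prop)
      apply ContinuousOn.rpow_const (by fun_prop)
      intro x hx; left; have := hx.1; linarith)
    exact this

lemma bl_nonneg {u w m a p s : ℝ} (h0 : 0 ≤ s) (h1 : s ≤ a) : 0 ≤ bl u w m a p s := by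
  unfold bl
  have : 0 ≤ a - s := by linarith
  positivity

lemma bl_est (u w m : ℝ) (hu : 0 < u) (hw : 0 < w) (hm : 0 < m) :
    ∃ C : ℝ, 0 < C ∧ ∀ a p : ℝ, 0 < a → 0 ≤ p →
      C⁻¹ * (a ^ (w - 1) * (a / (1 + a * p)) ^ u) ≤ (∫ s in (0:ℝ)..a, bl u w m a p s) ∧
      (∫ s in (0:ℝ)..a, bl u w m a p s) ≤ C * (a ^ (w - 1) * (a / (1 + a * p)) ^ u) := by
  -- upper
  obtain ⟨C1, hC1, h1⟩ := exp_dom u (m/2) hu (by positivity)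
  have hup : ∃ C : ℝ, 0 < C ∧ ∀ a p : ℝ, 0 < a → 0 ≤ p →
      (∫ s in (0:ℝ)..a, bl u w m a p s) ≤ C * (a ^ (w - 1) * (a / (1 + a * p)) ^ u) := by
    refine ⟨2 ^ |w-1| * (exp m * ((1/m)^u * Gamma u)) + 2 ^ |u-1| * C1 / w, by
      have := Gamma_pos_of_pos hu
      positivity, fun a p ha hp => ?_⟩
    have hap : 0 ≤ a * p := by positivity
    set σ := a / (1 + a * p) with hσ
    have hσ0 : 0 < σ := by positivity
    have hE : ∀ s ∈ Set.Ioo 0 a, exp (-(m*p*s)) ≤ exp m * exp (-(m/σ * s)) := by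
      intro s hs
      rw [← exp_add, exp_le_exp, hσ]
      have : s / a ≤ 1 := by rw [div_le_one ha]; exact hs.2.le
      have e : m / (a / (1 + a*p)) * s = m * (s/a) + m * p * s := by field_simp
      rw [e]; nlinarith
    have hgi : IntegrableOn (fun s : ℝ => s ^ (u-1) * exp (-(m/σ * s))) (Set.Ioi 0) := by
      have := integrableOn_rpow_mul_exp_neg_mul_rpow (s := u - 1) (p := 1) (b := m/σ) (by linarith) (by norm_num) (by positivity)
      simpa using this
    have hgv : ∫ s in Set.Ioi (0:ℝ), s ^ (u-1) * exp (-(m/σ * s)) = (1/(m/σ))^u * Gamma u :=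
      integral_rpow_mul_exp_neg_mul_Ioi hu (by positivity)
    have i1 : IntervalIntegrable (fun s : ℝ => s ^ (u-1) * exp (-(m/σ * s))) volume 0 a := by
      rw [intervalIntegrable_iff_integrableOn_Ioc_of_le ha.le]
      exact hgi.mono_set Set.Ioc_subset_Ioi_self
    have v1 : (∫ s in (0:ℝ)..a, s ^ (u-1) * exp (-(m/σ * s))) ≤ (1/m)^u * Gamma u * σ ^ u := by
      rw [intervalIntegral.integral_of_le ha.le]
      calc _ ≤ ∫ s in Set.Ioi (0:ℝ), s ^ (u-1) * exp (-(m/σ * s)) := by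
            apply setIntegral_mono_set hgi
            · filter_upwards [ae_restrict_mem measurableSet_Ioi] with s hs
              have : (0:ℝ) < s := hs
              simp only [Pi.zero_apply]
              positivity
            · exact Filter.Eventually.of_forall Set.Ioc_subset_Ioi_self
        _ = _ := by
          rw [hgv, show (1/(m/σ)) = 1/m*σ by field_simp, mul_rpow (by positivity) hσ0.le]; ring
    have i2 : IntervalIntegrable (fun s : ℝ => (a - s) ^ (w - 1)) volume 0 a := by
      have h0 : IntervalIntegrable (fun s : ℝ => s ^ (w - 1)) volume a 0 :=
        intervalIntegral.intervalIntegrable_rpow' (by linarith)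
      have := h0.comp_sub_left a
      convert this using 1 <;> ring
    have v2 : (∫ s in (0:ℝ)..a, (a - s) ^ (w-1)) = a ^ w / w := by
      rw [intervalIntegral.integral_comp_sub_left (fun s => s ^ (w-1)) a]
      rw [integral_rpow (by left; linarith)]
      simp [zero_rpow hw.ne']
    have pt : ∀ s ∈ Set.Ioo 0 a, bl u w m a p s ≤
        (2 ^ |w-1| * a ^ (w-1) * exp m) * (s ^ (u-1) * exp (-(m/σ * s))) +
        (2 ^ |u-1| * a ^ (u-1) * exp (-(m/2*(a*p)))) * (a - s) ^ (w-1) := by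
      intro s hs
      have hs0 : 0 < s := hs.1
      have hsa : 0 < a - s := by linarith [hs.2]
      unfold bl
      rcases le_total s (a/2) with h | h
      · have e1 := (rpow_cmp (w-1) ha hsa one_le_two (by linarith) (by linarith)).2
        have e2 := hE s hs
        have : 0 ≤ (2 ^ |u-1| * a ^ (u-1) * exp (-(m/2*(a*p)))) * (a - s) ^ (w-1) := by positivity
        calc _ ≤ (exp m * exp (-(m/σ * s))) * s ^ (u-1) * (2 ^ |w-1| * a ^ (w-1)) := by gcongr
          _ ≤ _ := by linarith
      · have e1 := (rpow_cmp (u-1) ha hs0 one_le_two (by linarith) (by linarith [hs.2])).2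
        have : 0 ≤ (2 ^ |w-1| * a ^ (w-1) * exp m) * (s ^ (u-1) * exp (-(m/σ * s))) := by positivity
        have e2 : exp (-(m*p*s)) ≤ exp (-(m/2*(a*p))) := by
          rw [exp_le_exp]
          have : m * p * (a/2) ≤ m*p*s := by gcongr
          linarith
        calc _ ≤ exp (-(m/2*(a*p))) * (2 ^ |u-1| * a ^ (u-1)) * (a-s)^(w-1) := by gcongr
          _ ≤ _ := by linarith
    have hh := intervalIntegral.integral_mono_on_of_le_Ioo ha.le (bl_int m p hu hw ha)
      ((i1.const_mul _).add (i2.const_mul _)) pt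
    rw [intervalIntegral.integral_add (i1.const_mul _) (i2.const_mul _),
      intervalIntegral.integral_const_mul, intervalIntegral.integral_const_mul, v2] at hh
    refine hh.trans ?_
    have e3 : exp (-(m/2*(a*p))) * a ^ u ≤ C1 * σ ^ u := by
      rw [hσ, div_rpow ha.le (by positivity), exp_neg, mul_div_assoc', le_div_iff₀ (by positivity)]
      have := h1 (a*p) hap
      have h3 : (1 + a*p)^u ≤ (2+a*p)^u := rpow_le_rpow (by positivity) (by linarith) hu.le
      calc _ = (exp (m/2*(a*p)))⁻¹ * a^u * (1+a*p)^u := by ring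
        _ ≤ (exp (m/2*(a*p)))⁻¹ * a^u * (C1 * exp (m/2*(a*p))) := by gcongr; linarith
        _ = _ := by field_simp
    have e4 : a ^ (u-1) * a ^ w = a ^ u * a ^ (w-1) := by
      rw [← rpow_add ha, ← rpow_add ha]; ring_nf
    calc _ ≤ (2 ^ |w-1| * a ^ (w-1) * exp m) * ((1/m)^u * Gamma u * σ ^ u) + 2 ^ |u-1| / w * (a^(w-1)) * (exp (-(m/2*(a*p))) * a ^ u) := by
          gcongr ?_ + ?_
          · gcongr
          · apply le_of_eq
            calc _ = 2 ^ |u-1| / w * (exp (-(m/2*(a*p)))) * (a ^ (u-1) * a ^ w) := by ring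
              _ = _ := by rw [e4]; ring
      _ ≤ (2 ^ |w-1| * a ^ (w-1) * exp m) * ((1/m)^u * Gamma u * σ ^ u) + 2 ^ |u-1| / w * (a^(w-1)) * (C1 * σ ^ u) := by gcongr
      _ = _ := by ring
  have hlo : ∃ C : ℝ, 0 < C ∧ ∀ a p : ℝ, 0 < a → 0 ≤ p →
      C * (a ^ (w - 1) * (a / (1 + a * p)) ^ u) ≤ (∫ s in (0:ℝ)..a, bl u w m a p s) := by
    refine ⟨exp (-m) * (2 ^ |w-1|)⁻¹ * ((1/2)^u / u), by positivity, fun a p ha hp => ?_⟩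
    have hap : 0 ≤ a * p := by positivity
    set σ := a / (1 + a * p) with hσ
    have hσ0 : 0 < σ := by positivity
    have hσa : σ ≤ a := by rw [hσ]; apply div_le_self ha.le; linarith
    have hpσ : p * σ ≤ 1 := by
      rw [hσ, mul_div_assoc', div_le_one (by positivity)]; linarith
    have i0 := bl_int m p hu hw ha
    have i1 : IntervalIntegrable (bl u w m a p) volume 0 (σ/2) := by
      apply i0.mono_set
      rw [Set.uIcc_of_le (by linarith), Set.uIcc_of_le (by linarith)]
      exact Set.Icc_subset_Icc le_rfl (by linarith)
    have i2 : IntervalIntegrable (fun s : ℝ => s ^ (u - 1)) volume 0 (σ/2) :=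
      intervalIntegral.intervalIntegrable_rpow' (by linarith)
    have v2 : (∫ s in (0:ℝ)..(σ/2), s ^ (u-1)) = (σ/2) ^ u / u := by
      rw [integral_rpow (by left; linarith)]
      simp [zero_rpow hu.ne']
    have pt : ∀ s ∈ Set.Ioo 0 (σ/2), (exp (-m) * ((2 ^ |w-1|)⁻¹ * a ^ (w-1))) * s ^ (u-1) ≤ bl u w m a p s := by
      intro s hs
      have hs0 : 0 < s := hs.1
      have hsa : 0 < a - s := by linarith [hs.2]
      have e1 := (rpow_cmp (w-1) ha hsa one_le_two (by linarith [hs.2]) (by linarith [hs.2])).1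
      have e2 : exp (-m) ≤ exp (-(m*p*s)) := by
        rw [exp_le_exp]
        have : p * s ≤ p * σ := by gcongr; linarith [hs.2]
        nlinarith
      unfold bl
      calc _ = exp (-m) * s ^ (u-1) * ((2 ^ |w-1|)⁻¹ * a ^ (w-1)) := by ring
        _ ≤ _ := by gcongr
    have hh := intervalIntegral.integral_mono_on_of_le_Ioo (by linarith) (i2.const_mul _) i1 pt
    rw [intervalIntegral.integral_const_mul, v2] at hh
    have h3 : (∫ s in (0:ℝ)..(σ/2), bl u w m a p s) ≤ ∫ s in (0:ℝ)..a, bl u w m a p s := by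
      apply intervalIntegral.integral_mono_interval le_rfl (by linarith) (by linarith) _ i0
      filter_upwards [ae_restrict_mem measurableSet_Ioc] with s hs
      exact bl_nonneg hs.1.le hs.2
    refine le_trans (le_of_eq ?_) (hh.trans h3)
    rw [show σ/2 = 1/2*σ by ring, mul_rpow (by norm_num) hσ0.le]; ring
  obtain ⟨C, hC, h⟩ := hup
  obtain ⟨c, hc, h'⟩ := hlo
  refine ⟨C + c⁻¹, by positivity, fun a p ha hp => ⟨?_, ?_⟩⟩
  · refine le_trans ?_ (h' a p ha hp)
    gcongr
    rw [inv_le_comm₀ (by positivity) hc]; linarith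
  · refine (h a p ha hp).trans ?_
    gcongr
    have : 0 < c⁻¹ := by positivity
    linarith


lemma erk1_est (k : ℝ) (hk : 0 < k) : ∃ C : ℝ, 0 < C ∧ ∀ q v : ℝ, 0 ≤ q → 0 ≤ v →
    (C⁻¹ * (1 + q * v) ^ (-k) ≤ Erk1 k (q/2) v * exp (-(q*v/2)) ∧
      Erk1 k (q/2) v * exp (-(q*v/2)) ≤ C * (1 + q * v) ^ (-k)) ∧
    (C⁻¹ * (1 + q * v) ^ (-(k+1)) ≤ Erk1 k (-q/2) v * exp (-(q*v/2)) ∧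
      Erk1 k (-q/2) v * exp (-(q*v/2)) ≤ C * (1 + q * v) ^ (-(k+1))) := by
  obtain ⟨C1, hC1, h1⟩ := bl_est k (k+1) 1 hk (by linarith) one_pos
  obtain ⟨C2, hC2, h2⟩ := bl_est (k+1) k 1 (by linarith) hk one_pos
  set N := (Real.Gamma (k + 1/2) / (Real.sqrt Real.pi * Real.Gamma k)) * (2 * (2 ^ (k-1) * 2 ^ k)) with hN
  have hN0 : 0 < N := by
    have := Gamma_pos_of_pos hk
    have := Gamma_pos_of_pos (show 0 < k + 1/2 by linarith)
    positivity
  have f1 : ∀ q v : ℝ, Erk1 k (q/2) v * exp (-(q*v/2)) = N * ∫ s in (0:ℝ)..1, bl k (k+1) 1 1 (q*v) s := by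
    intro q v
    unfold Erk1
    have := intervalIntegral.integral_comp_sub_mul (a := 0) (b := 1)
      (fun z => exp (z * (q/2) * v) * (1 - z) ^ (k - 1) * (1 + z) ^ k) (c := 2) (by norm_num) 1
    norm_num at this
    have e : (∫ z in (-1 : ℝ)..1, exp (z * (q/2) * v) * (1 - z) ^ (k - 1) * (1 + z) ^ k) = 2 * ∫ (x : ℝ) in (0:ℝ)..1, exp ((1 - 2 * x) * (q / 2) * v) * (2 * x) ^ (k - 1) * (1 + (1 - 2 * x)) ^ k := by
      rw [this]; ring
    have e2 : (∫ (x : ℝ) in (0:ℝ)..1, exp ((1 - 2 * x) * (q / 2) * v) * (2 * x) ^ (k - 1) * (1 + (1 - 2 * x)) ^ k) = ∫ x in (0:ℝ)..1, (exp (q*v/2) * (2^(k-1) * 2 ^ k)) * bl k (k+1) 1 1 (q*v) x := by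
      apply intervalIntegral.integral_congr
      intro x hx
      rw [Set.uIcc_of_le zero_le_one] at hx
      have h3 : 0 ≤ 1 - x := by linarith [hx.2]
      simp only [bl]
      rw [show 1 + (1 - 2*x) = 2 * (1-x) by ring, mul_rpow two_pos.le hx.1, mul_rpow two_pos.le h3,
        show (1 - 2 * x) * (q / 2) * v = q*v/2 + -(1 * (q*v) * x) by ring, exp_add, add_sub_cancel_right]
      ring
    rw [e, e2, intervalIntegral.integral_const_mul, hN, exp_neg]
    field_simp
  have f2 : ∀ q v : ℝ, Erk1 k (-q/2) v * exp (-(q*v/2)) = N * ∫ s in (0:ℝ)..1, bl (k+1) k 1 1 (q*v) s := by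
    intro q v
    unfold Erk1
    have := intervalIntegral.integral_comp_add_mul (a := 0) (b := 1)
      (fun z => exp (z * (-q/2) * v) * (1 - z) ^ (k - 1) * (1 + z) ^ k) (c := 2) (by norm_num) (-1)
    norm_num at this
    have e : (∫ z in (-1 : ℝ)..1, exp (z * (-q/2) * v) * (1 - z) ^ (k - 1) * (1 + z) ^ k) = 2 * ∫ (x : ℝ) in (0:ℝ)..1, exp ((-1 + 2 * x) * (-q / 2) * v) * (1 - (-1 + 2 * x)) ^ (k - 1) * (2 * x) ^ k := by
      rw [this]; ring
    have e2 : (∫ (x : ℝ) in (0:ℝ)..1, exp ((-1 + 2 * x) * (-q / 2) * v) * (1 - (-1 + 2 * x)) ^ (k - 1) * (2 * x) ^ k) = ∫ x in (0:ℝ)..1, (exp (q*v/2) * (2^(k-1) * 2 ^ k)) * bl (k+1) k 1 1 (q*v) x := by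
      apply intervalIntegral.integral_congr
      intro x hx
      rw [Set.uIcc_of_le zero_le_one] at hx
      have h3 : 0 ≤ 1 - x := by linarith [hx.2]
      simp only [bl]
      rw [show 1 - (-1 + 2*x) = 2 * (1-x) by ring, mul_rpow two_pos.le hx.1, mul_rpow two_pos.le h3,
        show (-1 + 2 * x) * (-q / 2) * v = q*v/2 + -(1 * (q*v) * x) by ring, exp_add, add_sub_cancel_right]
      ring
    rw [e, e2, intervalIntegral.integral_const_mul, hN, exp_neg]
    field_simp
  refine ⟨N * C1 + N * C2 + C1 / N + C2 / N, by positivity, fun q v hq hv => ?_⟩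
  have hqv : 0 ≤ q * v := by positivity
  have key : ∀ (u D I : ℝ), 0 < D → 0 < u → N * D ≤ N * C1 + N * C2 + C1 / N + C2 / N →
      D / N ≤ N * C1 + N * C2 + C1 / N + C2 / N →
      D⁻¹ * ((1:ℝ) ^ (0:ℝ) * (1 / (1 + 1 * (q*v))) ^ u) ≤ I → I ≤ D * ((1:ℝ) ^ (0:ℝ) * (1 / (1 + 1 * (q*v))) ^ u) →
      (N * C1 + N * C2 + C1 / N + C2 / N)⁻¹ * (1 + q*v)^(-u) ≤ N * I ∧ N * I ≤ (N * C1 + N * C2 + C1 / N + C2 / N) * (1 + q*v)^(-u) := by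
    intro u D I hD hu hD1 hD2 hl hr
    rw [one_mul, one_rpow, one_mul, one_div, inv_rpow (by positivity), ← rpow_neg (by positivity)] at hl hr
    constructor
    · calc _ ≤ (D/N)⁻¹ * (1 + q*v)^(-u) := by gcongr
        _ = N * (D⁻¹ * (1 + q*v)^(-u)) := by field_simp
        _ ≤ _ := by gcongr
    · calc _ ≤ N * (D * (1 + q*v)^(-u)) := by gcongr
        _ = N * D * (1 + q*v)^(-u) := by ring
        _ ≤ _ := by gcongr
  have p1 : 0 < N * C1 := by positivity
  have p2 : 0 < N * C2 := by positivity
  have p3 : 0 < C1 / N := by positivity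
  have p4 : 0 < C2 / N := by positivity
  constructor
  · rw [f1]
    have := h1 1 (q*v) one_pos hqv
    exact key k C1 _ hC1 hk (by linarith) (by linarith) (by simpa using this.1) (by simpa using this.2)
  · rw [f2]
    have := h2 1 (q*v) one_pos hqv
    exact key (k+1) C2 _ hC2 (by linarith) (by linarith) (by linarith) (by simpa using this.1) (by simpa using this.2)

lemma meas_int (F : ℝ → ℝ → ℝ) (hF : Measurable (fun z : ℝ × ℝ => F z.1 z.2)) (a b : ℝ) :
    Measurable (fun x => ∫ y in a..b, F x y) := by
  unfold intervalIntegral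
  apply Measurable.sub
  · exact (hF.stronglyMeasurable.integral_prod_right (ν := volume.restrict (Set.Ioc a b))).measurable
  · exact (hF.stronglyMeasurable.integral_prod_right (ν := volume.restrict (Set.Ioc b a))).measurable

lemma erk1_meas (k x : ℝ) : Measurable (Erk1 k x) := by
  unfold Erk1
  apply Measurable.const_mul
  apply meas_int (fun v z => exp (z * x * v) * (1 - z) ^ (k - 1) * (1 + z) ^ k)
  fun_prop

/-- sandwich for monotone integrals -/
lemma ii_of_le {f g : ℝ → ℝ} {a : ℝ} (ha : 0 < a) (hf : Measurable f)
    (hg : IntervalIntegrable g volume 0 a) (h0 : ∀ s ∈ Set.Ioo 0 a, 0 ≤ f s)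
    (h : ∀ s ∈ Set.Ioo 0 a, f s ≤ g s) : IntervalIntegrable f volume 0 a := by
  rw [intervalIntegrable_iff_integrableOn_Ioo_of_le ha.le] at *
  apply Integrable.mono' hg hf.aestronglyMeasurable
  filter_upwards [ae_restrict_mem measurableSet_Ioo] with s hs
  rw [norm_of_nonneg (h0 s hs)]; exact h s hs

lemma dbl (f : ℝ → ℝ → ℝ) (hf : Measurable (fun z : ℝ × ℝ => f z.1 z.2)) (a b : ℝ) (ha : 0 < a) (hb : 0 < b)
    (h1 h2 r1 r2 H1 H2 R1 R2 : ℝ → ℝ)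
    (ih1 : IntervalIntegrable h1 volume 0 a) (ih2 : IntervalIntegrable h2 volume 0 a)
    (iH1 : IntervalIntegrable H1 volume 0 a) (iH2 : IntervalIntegrable H2 volume 0 a)
    (ir1 : IntervalIntegrable r1 volume 0 b) (ir2 : IntervalIntegrable r2 volume 0 b)
    (iR1 : IntervalIntegrable R1 volume 0 b) (iR2 : IntervalIntegrable R2 volume 0 b)
    (h0 : ∀ r ∈ Set.Ioo 0 b, ∀ s ∈ Set.Ioo 0 a, 0 ≤ f r s)
    (hl : ∀ r ∈ Set.Ioo 0 b, ∀ s ∈ Set.Ioo 0 a, r1 r * h1 s + r2 r * h2 s ≤ f r s)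
    (hu : ∀ r ∈ Set.Ioo 0 b, ∀ s ∈ Set.Ioo 0 a, f r s ≤ R1 r * H1 s + R2 r * H2 s) :
    ((∫ r in (0:ℝ)..b, r1 r) * (∫ s in (0:ℝ)..a, h1 s) + (∫ r in (0:ℝ)..b, r2 r) * (∫ s in (0:ℝ)..a, h2 s)
      ≤ ∫ r in (0:ℝ)..b, ∫ s in (0:ℝ)..a, f r s) ∧
    ((∫ r in (0:ℝ)..b, ∫ s in (0:ℝ)..a, f r s) ≤
      (∫ r in (0:ℝ)..b, R1 r) * (∫ s in (0:ℝ)..a, H1 s) + (∫ r in (0:ℝ)..b, R2 r) * (∫ s in (0:ℝ)..a, H2 s)) := by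
  have comb : ∀ (u v : ℝ → ℝ) (x y : ℝ), IntervalIntegrable u volume 0 a → IntervalIntegrable v volume 0 a →
      (∫ s in (0:ℝ)..a, x * u s + y * v s) = x * (∫ s in (0:ℝ)..a, u s) + y * ∫ s in (0:ℝ)..a, v s := by
    intro u v x y hu hv
    rw [intervalIntegral.integral_add (hu.const_mul _) (hv.const_mul _), intervalIntegral.integral_const_mul,
      intervalIntegral.integral_const_mul]
  have comb' : ∀ (u v : ℝ → ℝ) (x y : ℝ), IntervalIntegrable u volume 0 b → IntervalIntegrable v volume 0 b →
      (∫ s in (0:ℝ)..b, u s * x + v s * y) = (∫ s in (0:ℝ)..b, u s) * x + (∫ s in (0:ℝ)..b, v s) * y := by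
    intro u v x y hu hv
    rw [intervalIntegral.integral_add (hu.mul_const _) (hv.mul_const _), intervalIntegral.integral_mul_const,
      intervalIntegral.integral_mul_const]
  have iin : ∀ r ∈ Set.Ioo 0 b, IntervalIntegrable (f r) volume 0 a := by
    intro r hr
    refine ii_of_le ha ?_ ((iH1.const_mul (R1 r)).add (iH2.const_mul (R2 r))) (h0 r hr) (hu r hr)
    exact hf.comp (measurable_const.prodMk measurable_id)
  have J1 : ∀ r ∈ Set.Ioo 0 b, r1 r * (∫ s in (0:ℝ)..a, h1 s) + r2 r * (∫ s in (0:ℝ)..a, h2 s) ≤ ∫ s in (0:ℝ)..a, f r s := by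
    intro r hr
    rw [← comb _ _ _ _ ih1 ih2]
    exact intervalIntegral.integral_mono_on_of_le_Ioo ha.le ((ih1.const_mul (r1 r)).add (ih2.const_mul (r2 r))) (iin r hr) (hl r hr)
  have J2 : ∀ r ∈ Set.Ioo 0 b, (∫ s in (0:ℝ)..a, f r s) ≤ R1 r * (∫ s in (0:ℝ)..a, H1 s) + R2 r * (∫ s in (0:ℝ)..a, H2 s) := by
    intro r hr
    rw [← comb _ _ _ _ iH1 iH2]
    exact intervalIntegral.integral_mono_on_of_le_Ioo ha.le (iin r hr) ((iH1.const_mul (R1 r)).add (iH2.const_mul (R2 r))) (hu r hr)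
  have J0 : ∀ r ∈ Set.Ioo 0 b, 0 ≤ ∫ s in (0:ℝ)..a, f r s := by
    intro r hr
    have := intervalIntegral.integral_mono_on_of_le_Ioo ha.le (intervalIntegrable_const (c := (0:ℝ))) (iin r hr) (h0 r hr)
    simpa using this
  have iU := (iR1.mul_const (∫ s in (0:ℝ)..a, H1 s)).add (iR2.mul_const (∫ s in (0:ℝ)..a, H2 s))
  have iL := (ir1.mul_const (∫ s in (0:ℝ)..a, h1 s)).add (ir2.mul_const (∫ s in (0:ℝ)..a, h2 s))
  have iout : IntervalIntegrable (fun r => ∫ s in (0:ℝ)..a, f r s) volume 0 b :=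
    ii_of_le hb (meas_int f hf 0 a) iU J0 J2
  rw [← comb' _ _ _ _ ir1 ir2, ← comb' _ _ _ _ iR1 iR2]
  exact ⟨intervalIntegral.integral_mono_on_of_le_Ioo hb.le iL iout J1,
    intervalIntegral.integral_mono_on_of_le_Ioo hb.le iout iU J2⟩


/-- estimate of `u/(1+qu)` -/
lemma gcmp {q b σ s X : ℝ} (hq : 0 ≤ q) (hb : 0 < b) (hσ : 0 < σ) (hs : 0 < s) (hX : 1 + s / σ ≤ X) :
    (s + b) / (1 + q * (s + b)) ≤ X * ((σ + b) / (1 + q * (σ + b))) ∧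
    (σ + b) / (1 + q * (σ + b)) * (s / σ) ≤ X * ((s + b) / (1 + q * (s + b))) ∧
    1 + q * (s + b) ≤ X * (1 + q * (σ + b)) := by
  have hsσ : 0 < s / σ := by positivity
  have hs' : s = (s/σ) * σ := by field_simp
  set y := s / σ with hy
  clear_value y
  subst hs'
  refine ⟨?_, ?_, ?_⟩
  · calc _ ≤ (1 + y) * ((σ + b) / (1 + q * (σ + b))) := by
          rw [mul_div_assoc', div_le_div_iff₀ (by positivity) (by positivity)]
          have h1 : 0 ≤ y * b := by positivity
          have h2 : 0 ≤ σ + y * (y * σ) + 2 * (y * b) := by positivity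
          have h3 : 0 ≤ y * (q * (σ + b) * (y*σ + b)) := by positivity
          nlinarith
      _ ≤ _ := by gcongr
  · calc _ ≤ (1 + y) * ((y*σ + b) / (1 + q * (y*σ + b))) := by
          rw [mul_div_assoc', div_mul_eq_mul_div, div_le_div_iff₀ (by positivity) (by positivity)]
          have h2 : 0 ≤ y * (y * σ) + b := by positivity
          have h3 : 0 ≤ (q * (σ + b) * (y*σ + b)) := by positivity
          nlinarith
      _ ≤ _ := by gcongr
  · calc _ ≤ (1 + y) * (1 + q * (σ + b)) := by
          have h2 : 0 ≤ q * σ := by positivity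
          have h3 : 0 ≤ y * (q * b) := by positivity
          nlinarith
      _ ≤ _ := by gcongr

set_option maxHeartbeats 2000000 in
lemma pw (k K0 : ℝ) (hk : 0 < k) (hK0 : 0 < K0) : ∃ C : ℝ, 0 < C ∧ ∀ a b p q s r e1 e2 : ℝ,
    0 < b → b ≤ a → 0 ≤ p → 0 ≤ q → 0 < s → s < a → 0 < r → r < b →
    K0⁻¹ * (1 + q * (s + b - r)) ^ (-k) ≤ e1 → e1 ≤ K0 * (1 + q * (s + b - r)) ^ (-k) →
    K0⁻¹ * (1 + q * (s + b - r)) ^ (-(k+1)) ≤ e2 → e2 ≤ K0 * (1 + q * (s + b - r)) ^ (-(k+1)) →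
    (C⁻¹ * (a ^ (k-1) * ((a / (1 + a * p) + b) / (1 + q * (a / (1 + a * p) + b))) ^ k * (a / (1 + a * p)) ^ (-k)) *
      (a * (bl (k+1) k 1 b (p+q) r * bl (2*k+1) k 3 a p s) +
       (1 + q * (a / (1 + a * p) + b))⁻¹ * (bl (k+1) (k+1) 1 b (p+q) r * bl (2*k) (k+1) 3 a p s)) ≤
      (s * (a + b - r) * e1 + (a - s) * (b - r) * e2) * ((s + b) * r) * exp (-(p*s) - (p+q) * r) *
        ((a - s) * (a + b - r) * s * (b - r) * (s + b) * r) ^ (k-1)) ∧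
    ((s * (a + b - r) * e1 + (a - s) * (b - r) * e2) * ((s + b) * r) * exp (-(p*s) - (p+q) * r) *
        ((a - s) * (a + b - r) * s * (b - r) * (s + b) * r) ^ (k-1) ≤
     C * (a ^ (k-1) * ((a / (1 + a * p) + b) / (1 + q * (a / (1 + a * p) + b))) ^ k) *
      (a * (bl (k+1) k (1/2) b (p+q) r * bl (k+1) k (1/2) a p s) +
       (1 + q * b)⁻¹ * (bl (k+1) (k+1) (1/2) b (p+q) r * bl k (k+1) (1/2) a p s))) := by
  obtain ⟨C5, hC5, h5⟩ := exp_dom (k+1) (1/2) (by linarith) (by norm_num)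
  obtain ⟨C7, hC7, h7⟩ := exp_dom k (1/2) hk (by norm_num)
  refine ⟨2 ^ |k-1| * (K0 * C5 * C7) * 2 + 2 ^ |k-1| * (K0 * C7) * 2, by positivity, ?_⟩
  intro a b p q s r e1 e2 hb hba hp hq hs hsa hr hrb l1 u1 l2 u2
  have ha : 0 < a := by linarith
  set σ := a / (1 + a * p) with hσd
  have hσ : 0 < σ := by positivity
  have hX : 1 + s / σ ≤ 2 + p * s := by
    have : s / a ≤ 1 := by rw [div_le_one ha]; exact hsa.le
    have e : s / σ = s / a + p * s := by rw [hσd]; field_simp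
    rw [e]; linarith
  obtain ⟨g1, g2, g3⟩ := gcmp hq hb hσ hs hX
  set G := (σ + b) / (1 + q * (σ + b)) with hG
  have hG0 : 0 < G := by positivity
  have hc : 0 < a + b - r := by linarith
  have has : 0 < a - s := by linarith
  have hbr : 0 < b - r := by linarith
  have hsb : 0 < s + b := by linarith
  have hsbr : 0 < s + b - r := by linarith
  set Q := 1 + q * (s + b - r) with hQ
  set Qs := 1 + q * (s + b) with hQs
  have hQ0 : 0 < Q := by positivity
  have hQs0 : 0 < Qs := by positivity
  have hps : 0 ≤ p * s := by positivity
  have hqr : 0 ≤ q * r := by positivity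
  have c1 : Qs ≤ Q * (2 + q * r) := by
    have : 0 ≤ q * (s + b - r) * (q * r) := by positivity
    have : 0 ≤ q * (s + b - r) := by positivity
    rw [hQs, hQ]; nlinarith
  have c2 : Q ≤ Qs := by rw [hQ, hQs]; linarith
  have c3 : 1 + q * b ≤ Qs := by
    have : 0 ≤ q * s := by positivity
    rw [hQs]; linarith
  have up : ∀ j : ℝ, 0 < j → j ≤ k + 1 → Q ^ (-j) ≤ C5 * exp (q * r / 2) * Qs ^ (-j) := by
    intro j hj hjk
    rw [rpow_neg hQ0.le, rpow_neg hQs0.le, ← div_eq_mul_inv, inv_le_iff_one_le_mul₀ (by positivity),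
      div_mul_eq_mul_div, one_le_div (by positivity)]
    calc Qs ^ j ≤ (Q * (2 + q*r)) ^ j := rpow_le_rpow hQs0.le c1 hj.le
      _ = (2 + q*r)^j * Q ^ j := by rw [mul_rpow hQ0.le (by positivity)]; ring
      _ ≤ (2 + q*r)^(k+1) * Q ^ j := by
        gcongr
        linarith
      _ ≤ (C5 * exp (1/2 * (q*r))) * Q ^ j := by gcongr; exact h5 _ hqr
      _ = _ := by ring_nf
  have lo : ∀ j : ℝ, 0 < j → Qs ^ (-j) ≤ Q ^ (-j) := by
    intro j hj
    exact rpow_le_rpow_of_nonpos hQ0 c2 (by linarith)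
  have gs : Qs ^ (-k) * (s + b) ^ k = ((s+b)/Qs)^k := by
    rw [div_rpow hsb.le hQs0.le, rpow_neg hQs0.le]; ring
  have sp : Qs ^ (-(k+1)) = Qs ^ (-k) * Qs⁻¹ := by
    rw [← rpow_neg_one, ← rpow_add hQs0]; ring_nf
  have g1' : ((s+b)/Qs)^k ≤ C7 * exp (p * s / 2) * G ^ k := by
    calc _ ≤ ((2 + p*s) * G)^k := rpow_le_rpow (by positivity) g1 hk.le
      _ = (2 + p*s)^k * G^k := by rw [mul_rpow (by positivity) (by positivity)]
      _ ≤ (C7 * exp (1/2 * (p*s))) * G^k := by gcongr; exact h7 _ hps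
      _ = _ := by ring_nf
  have g2' : C7⁻¹ * (G ^ k * σ ^ (-k) * s ^ k * exp (-(p*s/2))) ≤ ((s+b)/Qs)^k := by
    have : (G * (s/σ))^k ≤ C7 * exp (1/2 * (p*s)) * ((s+b)/Qs)^k := by
      calc _ ≤ ((2+p*s) * ((s+b)/Qs))^k := rpow_le_rpow (by positivity) g2 hk.le
        _ = (2+p*s)^k * ((s+b)/Qs)^k := by rw [mul_rpow (by positivity) (by positivity)]
        _ ≤ _ := by gcongr; exact h7 _ hps
    rw [mul_rpow hG0.le (by positivity), div_rpow hs.le hσ.le] at this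
    rw [inv_mul_le_iff₀ hC7, exp_neg, ← div_eq_mul_inv, div_le_iff₀ (by positivity), rpow_neg hσ.le]
    calc _ = G ^ k * (s ^ k / σ ^ k) := by ring
      _ ≤ _ := this
      _ = _ := by ring_nf
  have g3' : 2⁻¹ * (exp (-(p*s)) * (1 + q * (σ + b))⁻¹) ≤ Qs⁻¹ := by
    rw [exp_neg, ← mul_inv, ← mul_inv]
    apply inv_anti₀ hQs0
    refine g3.trans ?_
    have := add_one_le_exp (p*s)
    calc _ ≤ (2 * exp (p*s)) * (1 + q * (σ + b)) := by gcongr; linarith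
      _ = _ := by ring
  -- rewriting T
  set E := exp (-(p*s) - (p+q) * r) with hE
  have hT : (s * (a + b - r) * e1 + (a - s) * (b - r) * e2) * ((s + b) * r) * E *
        ((a - s) * (a + b - r) * s * (b - r) * (s + b) * r) ^ (k-1) =
      (s^(k-1) * (a-s)^(k-1) * (b-r)^(k-1) * r^k) * E * (a+b-r)^(k-1) *
        (s * (a + b - r) * (e1 * (s+b)^k) + (a - s) * (b - r) * (e2 * (s+b)^k)) := by
    rw [mul_rpow (by positivity) hr.le, mul_rpow (by positivity) hsb.le, mul_rpow (by positivity) hbr.le,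
      mul_rpow (by positivity) hs.le, mul_rpow has.le hc.le, rpow_sub_one hsb.ne' k, rpow_sub_one hr.ne' k]
    field_simp
  rw [hT]
  have hE0 : 0 < E := exp_pos _
  clear_value σ G E Q Qs
  clear hT
  obtain ⟨d1, d2⟩ := rpow_cmp (k-1) ha hc one_le_two (by linarith) (by linarith)
  have s1 : s * s^(k-1) = s ^ k := by rw [rpow_sub_one hs.ne']; field_simp
  have s2 : (a-s) * (a-s)^(k-1) = (a-s) ^ k := by rw [rpow_sub_one has.ne']; field_simp
  have s3 : (b-r) * (b-r)^(k-1) = (b-r) ^ k := by rw [rpow_sub_one hbr.ne']; field_simp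
  have s4 : s ^ (2*k) = s ^ k * s ^ k := by rw [← rpow_add hs]; ring_nf
  have s5 : s ^ (2*k-1) = s ^ k * s ^ (k-1) := by rw [← rpow_add hs]; ring_nf
  constructor
  · have b1 : K0⁻¹ * C7⁻¹ * (G ^ k * σ ^ (-k) * s ^ k * exp (-(p*s/2))) ≤ e1 * (s+b)^k := by
      calc _ = K0⁻¹ * (C7⁻¹ * (G ^ k * σ ^ (-k) * s ^ k * exp (-(p*s/2)))) := by ring
        _ ≤ K0⁻¹ * (Qs ^ (-k) * (s + b) ^ k) := by rw [gs]; gcongr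
        _ ≤ K0⁻¹ * (Q ^ (-k) * (s + b) ^ k) := by gcongr K0⁻¹ * (?_ * _); exact lo k hk
        _ = (K0⁻¹ * Q ^ (-k)) * (s + b) ^ k := by ring
        _ ≤ _ := by gcongr
    have b2 : K0⁻¹ * C7⁻¹ * (G ^ k * σ ^ (-k) * s ^ k * exp (-(p*s/2))) *
        (2⁻¹ * (exp (-(p*s)) * (1 + q * (σ + b))⁻¹)) ≤ e2 * (s+b)^k := by
      calc _ = K0⁻¹ * (C7⁻¹ * (G ^ k * σ ^ (-k) * s ^ k * exp (-(p*s/2)))) *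
              (2⁻¹ * (exp (-(p*s)) * (1 + q * (σ + b))⁻¹)) := by ring
        _ ≤ K0⁻¹ * (Qs ^ (-k) * (s + b) ^ k) * Qs⁻¹ := by rw [gs]; gcongr
        _ = K0⁻¹ * (Qs ^ (-(k+1)) * (s + b) ^ k) := by rw [sp]; ring
        _ ≤ K0⁻¹ * (Q ^ (-(k+1)) * (s + b) ^ k) := by
            gcongr K0⁻¹ * (?_ * _); exact lo (k+1) (by linarith)
        _ = (K0⁻¹ * Q ^ (-(k+1))) * (s + b) ^ k := by ring
        _ ≤ _ := by gcongr
    have x1 : exp (-(3*p*s)) * exp (-(1*(p+q)*r)) ≤ E * exp (-(p*s/2)) := by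
      rw [hE, ← exp_add, ← exp_add, exp_le_exp]; linarith
    have x2 : exp (-(3*p*s)) * exp (-(1*(p+q)*r)) ≤ E * exp (-(p*s/2)) * exp (-(p*s)) := by
      rw [hE, ← exp_add, ← exp_add, ← exp_add, exp_le_exp]; linarith
    have hCle : (2 ^ |k-1| * (K0 * C5 * C7) * 2 + 2 ^ |k-1| * (K0 * C7) * 2)⁻¹ ≤
        (2 ^ |k-1| * (K0 * C7) * 2)⁻¹ := by
      apply inv_anti₀ (by positivity)
      have : 0 < 2 ^ |k-1| * (K0 * C5 * C7) * 2 := by positivity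
      linarith
    set Qσ := 1 + q * (σ + b) with hQσ
    have hQσ0 : 0 < Qσ := by positivity
    have hR : ∀ x : ℝ, x = a → x ≤ a + b - r := by intro x hx; linarith
    set M := (2 ^ |k-1| * (K0 * C7) * 2)⁻¹ * (a ^ (k-1) * G ^ k * σ ^ (-k)) with hM
    have hM0 : 0 < M := by positivity
    set W := s^(k-1) * (a-s)^(k-1) * (b-r)^(k-1) * r^k with hW
    have hW0 : 0 < W := by positivity
    set X3 := exp (-(3*p*s)) * exp (-(1*(p+q)*r)) with hX3
    have hX30 : 0 < X3 := by positivity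
    clear_value W M X3 Qσ
    calc _ ≤ M * (a * (bl (k+1) k 1 b (p+q) r * bl (2*k+1) k 3 a p s) +
           Qσ⁻¹ * (bl (k+1) (k+1) 1 b (p+q) r * bl (2*k) (k+1) 3 a p s)) := by
          have n1 : 0 ≤ bl (k+1) k 1 b (p+q) r := bl_nonneg hr.le hrb.le
          have n2 : 0 ≤ bl (k+1) (k+1) 1 b (p+q) r := bl_nonneg hr.le hrb.le
          have n3 : 0 ≤ bl (2*k+1) k 3 a p s := bl_nonneg hs.le hsa.le
          have n4 : 0 ≤ bl (2*k) (k+1) 3 a p s := bl_nonneg hs.le hsa.le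
          rw [hM]
          gcongr
      _ = M * W * s^k * X3 * (a * s + Qσ⁻¹ * ((a-s) * (b-r))) := by
          unfold bl
          rw [show k + 1 - 1 = k by ring, show 2*k+1-1 = 2*k by ring, s4, s5, ← s2, ← s3, hW, hX3]
          nth_rewrite 1 [← s1]
          ring
      _ = M * W * s^k * (a * s) * X3 + M * W * s^k * (Qσ⁻¹ * ((a-s) * (b-r))) * X3 := by ring
      _ ≤ M * W * s^k * (a * s) * (E * exp (-(p*s/2))) + M * W * s^k * (Qσ⁻¹ * ((a-s) * (b-r))) * (E * exp (-(p*s/2)) * exp (-(p*s))) := by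
          gcongr
      _ = W * E * ((2 ^ |k-1|)⁻¹ * a ^ (k-1)) * (s * a * 2⁻¹ * (K0⁻¹ * C7⁻¹ * (G ^ k * σ ^ (-k) * s ^ k * exp (-(p*s/2)))) +
            (a-s) * (b-r) * (K0⁻¹ * C7⁻¹ * (G ^ k * σ ^ (-k) * s ^ k * exp (-(p*s/2))) *
        (2⁻¹ * (exp (-(p*s)) * Qσ⁻¹)))) := by
          rw [hM]; simp only [mul_inv]; ring
      _ ≤ W * E * (a+b-r)^(k-1) * (s * (a+b-r) * (e1 * (s+b)^k) + (a-s) * (b-r) * (e2 * (s+b)^k)) := by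
          have : s * a * 2⁻¹ ≤ s * (a + b - r) := by nlinarith
          gcongr
  · have b1 : e1 * (s+b)^k ≤ K0 * C5 * C7 * (exp (q*r/2) * exp (p*s/2) * G^k) := by
      calc _ ≤ (K0 * Q ^ (-k)) * (s+b)^k := by gcongr
        _ ≤ (K0 * (C5 * exp (q * r / 2) * Qs ^ (-k))) * (s+b)^k := by
          gcongr; exact up k hk (by linarith)
        _ = K0 * C5 * exp (q * r / 2) * (Qs ^ (-k) * (s+b)^k) := by ring
        _ ≤ K0 * C5 * exp (q * r / 2) * (C7 * exp (p * s / 2) * G ^ k) := by rw [gs]; gcongr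
        _ = _ := by ring
    have b2 : e2 * (s+b)^k ≤ K0 * C5 * C7 * (exp (q*r/2) * exp (p*s/2) * G^k) * (1 + q*b)⁻¹ := by
      calc _ ≤ (K0 * Q ^ (-(k+1))) * (s+b)^k := by gcongr
        _ ≤ (K0 * (C5 * exp (q * r / 2) * Qs ^ (-(k+1)))) * (s+b)^k := by
          gcongr; exact up (k+1) (by linarith) le_rfl
        _ = K0 * C5 * exp (q * r / 2) * (Qs ^ (-k) * (s+b)^k) * Qs⁻¹ := by rw [sp]; ring
        _ ≤ K0 * C5 * exp (q * r / 2) * (C7 * exp (p * s / 2) * G ^ k) * (1 + q*b)⁻¹ := by rw [gs]; gcongr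
        _ = _ := by ring
    have x1 : E * (exp (q*r/2) * exp (p*s/2)) ≤ exp (-(1/2*p*s)) * exp (-(1/2*(p+q)*r)) := by
      rw [hE, ← exp_add, ← exp_add, ← exp_add, exp_le_exp]
      have : 0 ≤ p * r := by positivity
      linarith
    set W := s^(k-1) * (a-s)^(k-1) * (b-r)^(k-1) * r^k with hW
    have hW0 : 0 < W := by positivity
    clear_value W
    calc _ ≤ W * E * (2 ^ |k-1| * a ^ (k-1)) * (s * (2 * a) * (K0 * C5 * C7 * (exp (q*r/2) * exp (p*s/2) * G^k)) +
            (a - s) * (b - r) * (K0 * C5 * C7 * (exp (q*r/2) * exp (p*s/2) * G^k) * (1 + q*b)⁻¹)) := by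
          have : a + b - r ≤ 2 * a := by linarith
          have y1 : 0 ≤ e1 := le_trans (by positivity) l1
          have y2 : 0 ≤ e2 := le_trans (by positivity) l2
          gcongr
      _ = W * (2 ^ |k-1| * a ^ (k-1)) * (K0 * C5 * C7 * G^k) * (s * (2 * a) + (a-s) * (b-r) * (1 + q*b)⁻¹) *
            (E * (exp (q*r/2) * exp (p*s/2))) := by ring
      _ ≤ W * (2 ^ |k-1| * a ^ (k-1)) * (K0 * C5 * C7 * G^k) * (s * (2 * a) + 2 * ((a-s) * (b-r) * (1 + q*b)⁻¹)) *
            (exp (-(1/2*p*s)) * exp (-(1/2*(p+q)*r))) := by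
          have : 0 ≤ (a-s) * (b-r) * (1 + q*b)⁻¹ := by positivity
          have h2 : (a-s) * (b-r) * (1 + q*b)⁻¹ ≤ 2 * ((a-s) * (b-r) * (1 + q*b)⁻¹) := by linarith
          generalize (a-s) * (b-r) * (1 + q*b)⁻¹ = Y at *
          gcongr
      _ = (2 ^ |k-1| * (K0 * C5 * C7) * 2) * (a ^ (k-1) * G ^ k) *
      (a * (bl (k+1) k (1/2) b (p+q) r * bl (k+1) k (1/2) a p s) +
       (1 + q * b)⁻¹ * (bl (k+1) (k+1) (1/2) b (p+q) r * bl k (k+1) (1/2) a p s)) := by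
          unfold bl
          rw [show k + 1 - 1 = k by ring, ← s2, ← s3, hW, ← s1]
          ring
      _ ≤ _ := by
          have n1 : 0 ≤ bl (k+1) k (1/2) b (p+q) r := bl_nonneg hr.le hrb.le
          have n2 : 0 ≤ bl (k+1) (k+1) (1/2) b (p+q) r := bl_nonneg hr.le hrb.le
          have n3 : 0 ≤ bl (k+1) k (1/2) a p s := bl_nonneg hs.le hsa.le
          have n4 : 0 ≤ bl k (k+1) (1/2) a p s := bl_nonneg hs.le hsa.le
          have : 0 < 2 ^ |k-1| * (K0 * C7) * 2 := by positivity
          gcongr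
          linarith


lemma alg {a b p q : ℝ} (hb : 0 < b) (hba : b ≤ a) (hp : 0 ≤ p) (hq : 0 ≤ q) :
    let σ := a / (1 + a * p)
    let D := 1 + b * (p + q)
    let B := 1 + b * q
    let T := 1 + (a + b) * (p + q)
    let G := (σ + b) / (1 + q * (σ + b))
    (G * B * T / (a * D) ≤ 4 ∧ 4⁻¹ ≤ G * B * T / (a * D)) ∧
    σ + b * (1 + q * b)⁻¹ ≤ 2 * (σ * D / B) ∧
    3⁻¹ * (σ * D / B) ≤ σ + b * (1 + q * (σ + b))⁻¹ := by
  intro σ D B T G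
  have ha : 0 < a := by linarith
  obtain ⟨d, hd⟩ : ∃ d, d = a - b := ⟨_, rfl⟩
  have hd0 : 0 ≤ d := by linarith
  obtain rfl : a = b + d := by linarith
  have hA : 0 < 1 + (b + d) * p := by positivity
  have hM : 0 < 1 + (b+d) * p + q * (b + d) + q * b * (1 + (b+d) * p) := by positivity
  have hG : G = ((b+d) + b * (1 + (b+d) * p)) / (1 + (b+d) * p + q * (b + d) + q * b * (1 + (b+d) * p)) := by
    simp only [G, σ]; field_simp; ring_nf
  have hQ : (1 + q * (σ + b))⁻¹ = (1 + (b+d) * p) / (1 + (b+d) * p + q * (b + d) + q * b * (1 + (b+d) * p)) := by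
    simp only [σ]; field_simp; ring_nf
  refine ⟨⟨?_, ?_⟩, ?_, ?_⟩
  · rw [hG]
    simp only [B, T, D]
    rw [div_mul_eq_mul_div, div_mul_eq_mul_div, div_div, div_le_iff₀ (by positivity), ← sub_nonneg]
    ring_nf
    positivity
  · rw [hG]
    simp only [B, T, D]
    rw [div_mul_eq_mul_div, div_mul_eq_mul_div, div_div, inv_le_iff_one_le_mul₀ (by norm_num), div_mul_eq_mul_div,
       one_le_div (by positivity), ← sub_nonneg]
    ring_nf
    positivity
  · simp only [B, D, σ]
    rw [← div_eq_mul_inv, div_add_div _ _ (by positivity) (by positivity), div_mul_eq_mul_div, div_div, mul_div_assoc',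
      div_le_div_iff₀ (by positivity) (by positivity), ← sub_nonneg]
    ring_nf
    positivity
  · rw [hQ]
    simp only [B, D, σ]
    rw [mul_div_assoc' b, div_add_div _ _ (by positivity) (by positivity), div_mul_eq_mul_div, div_div, mul_div_assoc',
      div_le_div_iff₀ (by positivity) (by positivity), ← sub_nonneg]
    ring_nf
    positivity

lemma ident {k a b A D B T G : ℝ} (ha : 0 < a) (hb : 0 < b) (hA : 0 < A) (hD : 0 < D) (hB : 0 < B)
    (hT : 0 < T) (hG : 0 < G) :
    a^(k-1) * G^k * a ^ k * b^(k-1) * (b/D)^(k+1) * (a/A)^k * (a/A * D / B) =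
      (a^(4*k) * b^(2*k)) * (1 / (A^(k+1) * B^(k+1) * T^k)) * (G * B * T / (a * D))^k := by
  have e1 : a^(4*k) = a^k*a^k*a^k*a^k := by
    rw [← rpow_add ha, ← rpow_add ha, ← rpow_add ha]; ring_nf
  have e2 : b^(2*k) = b^k*b^k := by rw [← rpow_add hb]; ring_nf
  rw [e1, e2, div_rpow (x := G * B * T) (by positivity) (by positivity), div_rpow hb.le hD.le, div_rpow ha.le hA.le,
    mul_rpow (by positivity) hT.le, mul_rpow hG.le hB.le, mul_rpow ha.le hD.le,
    rpow_sub_one ha.ne', rpow_sub_one hb.ne', rpow_add_one hb.ne', rpow_add_one hD.ne', rpow_add_one hA.ne',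
    rpow_add_one hB.ne']
  field_simp

noncomputable def ff (k a b p q r s : ℝ) : ℝ :=
  (s * (a + b - r) * (Erk1 k (q/2) (s + b - r) * exp (-(q * (s + b - r)/2))) +
    (a - s) * (b - r) * (Erk1 k (-q/2) (s + b - r) * exp (-(q * (s + b - r)/2)))) * ((s + b) * r) *
    exp (-(p*s) - (p+q) * r) *
        ((a - s) * (a + b - r) * s * (b - r) * (s + b) * r) ^ (k-1)

lemma ff_meas (k a b p q : ℝ) : Measurable (fun z : ℝ × ℝ => ff k a b p q z.1 z.2) := by
  unfold ff
  have h1 := erk1_meas k (q/2)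
  have h2 := erk1_meas k (-q/2)
  fun_prop

set_option maxHeartbeats 1000000 in
lemma core (k : ℝ) (hk : 0 < k) : ∃ C : ℝ, 0 < C ∧ ∀ a b p q : ℝ, 0 < b → b ≤ a → 0 ≤ p → 0 ≤ q →
    C⁻¹ * ((a^(4*k) * b^(2*k)) * (1 / ((1 + a*p)^(k+1) * (1 + b*q)^(k+1) * (1 + (a+b)*(p+q))^k))) ≤
      (∫ r in (0:ℝ)..b, ∫ s in (0:ℝ)..a, ff k a b p q r s) ∧
    (∫ r in (0:ℝ)..b, ∫ s in (0:ℝ)..a, ff k a b p q r s) ≤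
      C * ((a^(4*k) * b^(2*k)) * (1 / ((1 + a*p)^(k+1) * (1 + b*q)^(k+1) * (1 + (a+b)*(p+q))^k))) := by
  obtain ⟨K0, hK0, hE⟩ := erk1_est k hk
  obtain ⟨C, hC, hpw⟩ := pw k K0 hk hK0
  have hk1 : 0 < k + 1 := by linarith
  have h2k : 0 < 2 * k := by linarith
  have h2k1 : 0 < 2 * k + 1 := by linarith
  obtain ⟨U1, hU1, u1⟩ := bl_est (k+1) k (1/2) hk1 hk (by norm_num)
  obtain ⟨U2, hU2, u2⟩ := bl_est (k+1) (k+1) (1/2) hk1 hk1 (by norm_num)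
  obtain ⟨U3, hU3, u3⟩ := bl_est k (k+1) (1/2) hk hk1 (by norm_num)
  obtain ⟨L1, hL1, l1⟩ := bl_est (k+1) k 1 hk1 hk (by norm_num)
  obtain ⟨L2, hL2, l2⟩ := bl_est (k+1) (k+1) 1 hk1 hk1 (by norm_num)
  obtain ⟨L3, hL3, l3⟩ := bl_est (2*k+1) k 3 h2k1 hk (by norm_num)
  obtain ⟨L4, hL4, l4⟩ := bl_est (2*k) (k+1) 3 h2k hk1 (by norm_num)
  set CU := C * (U1 * U1 + U2 * U3) * (2 * 4 ^ k) with hCU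
  set CL := C * (L1 * L3 + L2 * L4) * (3 * 4 ^ k) with hCL
  have hCU0 : 0 < CU := by positivity
  have hCL0 : 0 < CL := by positivity
  refine ⟨CU + CL, by positivity, fun a b p q hb hba hp hq => ?_⟩
  have ha : 0 < a := by linarith
  have hpq : 0 ≤ p + q := by linarith
  obtain ⟨⟨al1, al2⟩, al3, al4⟩ := alg hb hba hp hq
  set σ := a / (1 + a * p) with hσ
  have hσ0 : 0 < σ := by positivity
  set G := (σ + b) / (1 + q * (σ + b)) with hG
  have hG0 : 0 < G := by positivity
  set Qσ := 1 + q * (σ + b) with hQσ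
  have hQσ0 : 0 < Qσ := by positivity
  set cl := C⁻¹ * (a^(k-1) * G^k * σ^(-k)) with hcl
  set cu := C * (a^(k-1) * G^k) with hcu
  have hcl0 : 0 < cl := by positivity
  have hcu0 : 0 < cu := by positivity
  have main := dbl (ff k a b p q) (ff_meas k a b p q) a b ha hb
    (bl (2*k+1) k 3 a p) (bl (2*k) (k+1) 3 a p)
    (fun r => (cl * a) * bl (k+1) k 1 b (p+q) r) (fun r => (cl * Qσ⁻¹) * bl (k+1) (k+1) 1 b (p+q) r)
    (bl (k+1) k (1/2) a p) (bl k (k+1) (1/2) a p)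
    (fun r => (cu * a) * bl (k+1) k (1/2) b (p+q) r)
    (fun r => (cu * (1 + q*b)⁻¹) * bl (k+1) (k+1) (1/2) b (p+q) r)
    (bl_int _ _ h2k1 hk ha) (bl_int _ _ h2k hk1 ha) (bl_int _ _ hk1 hk ha) (bl_int _ _ hk hk1 ha)
    ((bl_int _ _ hk1 hk hb).const_mul _) ((bl_int _ _ hk1 hk1 hb).const_mul _)
    ((bl_int _ _ hk1 hk hb).const_mul _) ((bl_int _ _ hk1 hk1 hb).const_mul _)
    (by
      intro r hr s hs
      have hv : 0 ≤ s + b - r := by linarith [hr.2, hs.1]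
      obtain ⟨⟨a1, a2⟩, a3, a4⟩ := hE q (s+b-r) hq hv
      refine le_trans ?_ (hpw a b p q s r _ _ hb hba hp hq hs.1 hs.2 hr.1 hr.2 a1 a2 a3 a4).1
      have n1 : 0 ≤ bl (k+1) k 1 b (p+q) r := bl_nonneg hr.1.le hr.2.le
      have n2 : 0 ≤ bl (k+1) (k+1) 1 b (p+q) r := bl_nonneg hr.1.le hr.2.le
      have n3 : 0 ≤ bl (2*k+1) k 3 a p s := bl_nonneg hs.1.le hs.2.le
      have n4 : 0 ≤ bl (2*k) (k+1) 3 a p s := bl_nonneg hs.1.le hs.2.le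
      positivity)
    (by
      intro r hr s hs
      have hv : 0 ≤ s + b - r := by linarith [hr.2, hs.1]
      obtain ⟨⟨a1, a2⟩, a3, a4⟩ := hE q (s+b-r) hq hv
      refine le_trans (le_of_eq ?_) (hpw a b p q s r _ _ hb hba hp hq hs.1 hs.2 hr.1 hr.2 a1 a2 a3 a4).1
      ring)
    (by
      intro r hr s hs
      have hv : 0 ≤ s + b - r := by linarith [hr.2, hs.1]
      obtain ⟨⟨a1, a2⟩, a3, a4⟩ := hE q (s+b-r) hq hv
      refine le_trans (hpw a b p q s r _ _ hb hba hp hq hs.1 hs.2 hr.1 hr.2 a1 a2 a3 a4).2 (le_of_eq ?_)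
      ring)
  simp only [intervalIntegral.integral_const_mul] at main
  obtain ⟨m1, m2⟩ := main
  have u1a := (u1 a p ha hp).2
  have u3a := (u3 a p ha hp).2
  have u1b := (u1 b (p+q) hb hpq).2
  have u2b := (u2 b (p+q) hb hpq).2
  have l3a := (l3 a p ha hp).1
  have l4a := (l4 a p ha hp).1
  have l1b := (l1 b (p+q) hb hpq).1
  have l2b := (l2 b (p+q) hb hpq).1
  rw [← hσ] at u1a u3a l3a l4a
  have id := ident (k := k) (A := 1 + a * p) (D := 1 + b * (p+q)) (B := 1 + b * q) (T := 1 + (a+b) * (p+q)) (G := G)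
    ha hb (by positivity) (by positivity) (by positivity) (by positivity) hG0
  rw [← hσ] at id
  set ρ := b / (1 + b * (p+q)) with hρ
  have hρ0 : 0 < ρ := by positivity
  set Rt := (a^(4*k) * b^(2*k)) * (1 / ((1 + a*p)^(k+1) * (1 + b*q)^(k+1) * (1 + (a+b)*(p+q))^k)) with hRt
  have hRt0 : 0 < Rt := by positivity
  set gg := G * (1 + b * q) * (1 + (a+b) * (p+q)) / (a * (1 + b * (p+q))) with hgg
  have hgg0 : 0 < gg := by positivity
  have gu : gg ^ k ≤ 4 ^ k := rpow_le_rpow hgg0.le al1 hk.le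
  have gl : (4 ^ k)⁻¹ ≤ gg ^ k := by
    rw [← inv_rpow (by norm_num)]; exact rpow_le_rpow (by norm_num) al2 hk.le
  set SD := σ * (1 + b * (p+q)) / (1 + b * q) with hSD
  have hSD0 : 0 < SD := by positivity
  have sk : σ ^ (k+1) = σ ^ k * σ := rpow_add_one hσ0.ne' k
  have sa : a * a ^ (k-1) = a ^ k := by rw [rpow_sub_one ha.ne']; field_simp
  have sb : b * b ^ (k-1) = b ^ k := by rw [rpow_sub_one hb.ne']; field_simp
  have s2a : σ ^ (-k) * σ ^ (2*k) = σ ^ k := by rw [← rpow_add hσ0]; ring_nf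
  have s2b : σ ^ (-k) * σ ^ (2*k+1) = σ ^ k * σ := by rw [← sk, ← rpow_add hσ0]; ring_nf
  have kk : k + 1 - 1 = k := by ring
  rw [kk] at u3a u2b l4a l2b
  clear_value σ G Qσ ρ Rt gg SD
  have hqb : 0 < 1 + q * b := by positivity
  set Z := a^(k-1) * G^k * a ^ k * b^(k-1) * ρ^(k+1) * σ^k with hZ
  have hZ0 : 0 < Z := by positivity
  constructor
  · refine le_trans ?_ m1
    have nb1 : 0 ≤ ∫ s in (0:ℝ)..b, bl (k+1) k 1 b (p+q) s := le_trans (by positivity) l1b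
    have nb2 : 0 ≤ ∫ s in (0:ℝ)..b, bl (k+1) (k+1) 1 b (p+q) s := le_trans (by positivity) l2b
    have st : C⁻¹ * (L1 * L3 + L2 * L4)⁻¹ * (Z * (σ + b * Qσ⁻¹)) ≤
        (cl * a) * (L1⁻¹ * (b^(k-1) * ρ^(k+1))) * (L3⁻¹ * (a^(k-1) * σ^(2*k+1))) +
        (cl * Qσ⁻¹) * (L2⁻¹ * (b^k * ρ^(k+1))) * (L4⁻¹ * (a^k * σ^(2*k))) := by
      have i1 : (L1 * L3 + L2 * L4)⁻¹ ≤ (L1 * L3)⁻¹ := inv_anti₀ (by positivity) (by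
        have : 0 < L2 * L4 := by positivity
        linarith)
      have i2 : (L1 * L3 + L2 * L4)⁻¹ ≤ (L2 * L4)⁻¹ := inv_anti₀ (by positivity) (by
        have : 0 < L1 * L3 := by positivity
        linarith)
      calc _ = C⁻¹ * (L1 * L3 + L2 * L4)⁻¹ * (Z * σ) + C⁻¹ * (L1 * L3 + L2 * L4)⁻¹ * (Z * (b * Qσ⁻¹)) := by ring
        _ ≤ C⁻¹ * (L1 * L3)⁻¹ * (Z * σ) + C⁻¹ * (L2 * L4)⁻¹ * (Z * (b * Qσ⁻¹)) := by gcongr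
        _ = C⁻¹ * (L1 * L3)⁻¹ * (a^(k-1) * G^k * (a * a ^ (k-1)) * b^(k-1) * ρ^(k+1)) * (σ^k * σ) +
            C⁻¹ * (L2 * L4)⁻¹ * (a^(k-1) * G^k * a ^ k * (b * b^(k-1)) * ρ^(k+1)) * σ^k * Qσ⁻¹ := by
              rw [hZ, sa]; ring
        _ = _ := by
              rw [← s2b, ← s2a, hcl, sb]; simp only [mul_inv]; ring
    calc _ ≤ CL⁻¹ * Rt := by gcongr; linarith
      _ = C⁻¹ * (L1 * L3 + L2 * L4)⁻¹ * 3⁻¹ * (Rt * (4^k)⁻¹) := by rw [hCL]; simp only [mul_inv]; ring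
      _ ≤ C⁻¹ * (L1 * L3 + L2 * L4)⁻¹ * 3⁻¹ * (Rt * gg^k) := by gcongr
      _ = C⁻¹ * (L1 * L3 + L2 * L4)⁻¹ * (Z * (3⁻¹ * SD)) := by rw [← id]; ring
      _ ≤ C⁻¹ * (L1 * L3 + L2 * L4)⁻¹ * (Z * (σ + b * Qσ⁻¹)) := by gcongr
      _ ≤ _ := st
      _ ≤ _ := by gcongr
  · refine le_trans m2 ?_
    have nb1 : 0 ≤ ∫ s in (0:ℝ)..a, bl (k+1) k (1/2) a p s := le_trans (by positivity) (u1 a p ha hp).1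
    have nb2 : 0 ≤ ∫ s in (0:ℝ)..a, bl k (k+1) (1/2) a p s := le_trans (by positivity) (u3 a p ha hp).1
    calc _ ≤ (cu * a) * (U1 * (b^(k-1) * ρ^(k+1))) * (U1 * (a^(k-1) * σ^(k+1))) +
        (cu * (1+q*b)⁻¹) * (U2 * (b^k * ρ^(k+1))) * (U3 * (a^k * σ^k)) := by gcongr
      _ = C * (U1 * U1) * (a^(k-1) * G^k * (a * a ^ (k-1)) * b^(k-1) * ρ^(k+1)) * (σ^k * σ) +
            C * (U2 * U3) * (a^(k-1) * G^k * a ^ k * (b * b^(k-1)) * ρ^(k+1)) * σ^k * (1+q*b)⁻¹ := by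
              rw [sb, sk, hcu]; ring
      _ = C * (U1 * U1) * (Z * σ) + C * (U2 * U3) * (Z * (b * (1+q*b)⁻¹)) := by rw [hZ, sa]; ring
      _ ≤ C * (U1 * U1 + U2 * U3) * (Z * σ) + C * (U1 * U1 + U2 * U3) * (Z * (b * (1+q*b)⁻¹)) := by
          have : 0 < U1 * U1 := by positivity
          have : 0 < U2 * U3 := by positivity
          gcongr <;> linarith
      _ = C * (U1 * U1 + U2 * U3) * (Z * (σ + b * (1+q*b)⁻¹)) := by ring
      _ ≤ C * (U1 * U1 + U2 * U3) * (Z * (2 * SD)) := by gcongr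
      _ = C * (U1 * U1 + U2 * U3) * 2 * (Rt * gg^k) := by rw [← id]; ring
      _ ≤ C * (U1 * U1 + U2 * U3) * 2 * (Rt * 4^k) := by gcongr
      _ = CU * Rt := by rw [hCU]; ring
      _ ≤ _ := by gcongr; linarith

/-- Theorem 4.1: sharp estimate of the `A₂` Dunkl kernel. -/
theorem estimate_C312_case1 (k : ℝ) (hk : 0 < k) :
    ∃ C : ℝ, 0 < C ∧ ∀ l1 l2 l3 x1 x2 x3 : ℝ,
      l1 + l2 + l3 = 0 →
      l2 < l1 →
      l3 < l2 →
      x1 + x2 + x3 = 0 →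
      x1 ≤ x3 →
      x2 ≤ x1 →
      l2 - l3 ≤ l1 - l2 →
      (C⁻¹ * (Real.exp (l1 * x3 + l2 * x1 + l3 * x2) /
          ((1 + (l1 - l2) * (x3 - x1)) ^ (k + 1) * (1 + (l2 - l3) * (x1 - x2)) ^ (k + 1)
            * (1 + (l1 - l3) * (x3 - x2)) ^ k))
        ≤ EkA2 k x1 x2 x3 l1 l2 l3 ∧
      EkA2 k x1 x2 x3 l1 l2 l3
        ≤ C * (Real.exp (l1 * x3 + l2 * x1 + l3 * x2) /
          ((1 + (l1 - l2) * (x3 - x1)) ^ (k + 1) * (1 + (l2 - l3) * (x1 - x2)) ^ (k + 1)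
            * (1 + (l1 - l3) * (x3 - x2)) ^ k))) := by
  obtain ⟨C, hC, h⟩ := core k hk
  set N := 3 * Real.Gamma (3 * k) / Real.Gamma k ^ 2 with hN
  have hN0 : 0 < N := by
    have := Gamma_pos_of_pos hk
    have := Gamma_pos_of_pos (show 0 < 3 * k by linarith)
    positivity
  refine ⟨C * N + C * 2 ^ (2*k) / N, by positivity, ?_⟩
  intro l1 l2 l3 x1 x2 x3 hl h21 h32 hx h13 hx21 hba
  set E0 := Real.exp (l1 * x3 + l2 * x1 + l3 * x2) with hE0
  obtain ⟨a, rfl⟩ : ∃ a, l1 = l2 + a := ⟨l1 - l2, by ring⟩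
  obtain ⟨b, rfl⟩ : ∃ b, l2 = l3 + b := ⟨l2 - l3, by ring⟩
  obtain ⟨p, rfl⟩ : ∃ p, x3 = x1 + p := ⟨x3 - x1, by ring⟩
  obtain ⟨q, rfl⟩ : ∃ q, x1 = x2 + q := ⟨x1 - x2, by ring⟩
  have ha : 0 < a := by linarith
  have hb : 0 < b := by linarith
  have hp : 0 ≤ p := by linarith
  have hq : 0 ≤ q := by linarith
  have hba' : b ≤ a := by linarith
  obtain ⟨h1, h2⟩ := h a b p q hb hba' hp hq
  have hint : EkA2 k (x2 + q) x2 (x2 + q + p) (l3 + b + a) (l3 + b) l3 =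
      N / ((a * (a + b) * b) ^ (2*k)) * (E0 * ∫ r in (0:ℝ)..b, ∫ s in (0:ℝ)..a, ff k a b p q r s) := by
    unfold EkA2
    have e1 := intervalIntegral.integral_comp_add_left (a := 0) (b := b) (fun n2 => ∫ n1 in (l3+b)..(l3+b+a),
      ((n1 - (l3+b)) * ((l3+b+a) - n2) * Erk1 k ((x2+q - x2) / 2) (n1 - n2)
        + ((l3+b+a) - n1) * ((l3+b) - n2) * Erk1 k (-(x2+q - x2) / 2) (n1 - n2))
      * ((n1 - l3) * (n2 - l3)) * Real.exp ((x2+q + x2 - 2 * (x2+q+p)) * (n1 + n2) / 2)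
      * Wk k (l3+b+a) (l3+b) l3 n1 n2) l3
    rw [add_zero] at e1
    rw [← e1]
    have e2 : Vlam (l3 + b + a) (l3 + b) l3 = a * (a + b) * b := by unfold Vlam; ring
    rw [e2]
    have e3 : ∀ r : ℝ, (∫ n1 in (l3+b)..(l3+b+a),
      ((n1 - (l3+b)) * ((l3+b+a) - (l3+r)) * Erk1 k ((x2+q - x2) / 2) (n1 - (l3+r))
        + ((l3+b+a) - n1) * ((l3+b) - (l3+r)) * Erk1 k (-(x2+q - x2) / 2) (n1 - (l3+r)))
      * ((n1 - l3) * ((l3+r) - l3)) * Real.exp ((x2+q + x2 - 2 * (x2+q+p)) * (n1 + (l3+r)) / 2)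
      * Wk k (l3+b+a) (l3+b) l3 n1 (l3+r)) = E0 * ∫ s in (0:ℝ)..a, ff k a b p q r s := by
      intro r
      have e4 := intervalIntegral.integral_comp_add_left (a := 0) (b := a) (fun n1 =>
      ((n1 - (l3+b)) * ((l3+b+a) - (l3+r)) * Erk1 k ((x2+q - x2) / 2) (n1 - (l3+r))
        + ((l3+b+a) - n1) * ((l3+b) - (l3+r)) * Erk1 k (-(x2+q - x2) / 2) (n1 - (l3+r)))
      * ((n1 - l3) * ((l3+r) - l3)) * Real.exp ((x2+q + x2 - 2 * (x2+q+p)) * (n1 + (l3+r)) / 2)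
      * Wk k (l3+b+a) (l3+b) l3 n1 (l3+r)) (l3+b)
      rw [add_zero] at e4
      rw [← e4, ← intervalIntegral.integral_const_mul]
      apply intervalIntegral.integral_congr
      intro s _
      simp only [ff, Wk]
      have z1 : l3 + b + s - (l3 + r) = s + b - r := by ring
      have z2 : x2 + q - x2 = q := by ring
      rw [z1, z2]
      have z3 : Real.exp ((x2+q + x2 - 2 * (x2+q+p)) * (l3+b+s + (l3+r)) / 2) =
          E0 * exp (-(q * (s+b-r)/2)) * exp (-(p*s) - (p+q)*r) := by
        rw [hE0, ← exp_add, ← exp_add]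
        congr 1
        have y1 : a = -3*l3 - 2 * b := by linarith
        have y2 : p = -3*x2 - 2 * q := by linarith
        rw [y1, y2]
        ring
      rw [z3]
      have z4 : (l3 + b + a - (l3 + b + s)) * (l3 + b + a - (l3 + r)) * (l3 + b + s - (l3 + b)) * (l3 + b - (l3 + r)) *
          (l3 + b + s - l3) * (l3 + r - l3) = (a - s) * (a + b - r) * s * (b - r) * (s + b) * r := by ring
      rw [z4]
      ring
    simp only [e3]
    rw [intervalIntegral.integral_const_mul, hN]
    ring
  have hV1 : a^(4*k) * b^(2*k) ≤ (a * (a + b) * b) ^ (2*k) ∧ (a * (a + b) * b) ^ (2*k) ≤ 2 ^ (2*k) * (a^(4*k) * b^(2*k)) := by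
    have w : a^(4*k) * b^(2*k) = (a * a * b)^(2*k) := by
      rw [mul_rpow (by positivity) hb.le, mul_rpow ha.le ha.le, ← rpow_add ha]; ring_nf
    rw [w, ← mul_rpow (by norm_num) (by positivity)]
    constructor
    · apply rpow_le_rpow (by positivity) _ (by linarith)
      gcongr; linarith
    · apply rpow_le_rpow (by positivity) _ (by linarith)
      calc a * (a + b) * b ≤ a * (2 * a) * b := by gcongr; linarith
        _ = _ := by ring
  obtain ⟨v1, v2⟩ := hV1
  have q1 : l3 + b + a - (l3 + b) = a := by ring
  have q2 : x2 + q + p - (x2 + q) = p := by ring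
  have q3 : l3 + b - l3 = b := by ring
  have q4 : x2 + q - x2 = q := by ring
  have q5 : l3 + b + a - l3 = a + b := by ring
  have q6 : x2 + q + p - x2 = p + q := by ring
  rw [hint, q1, q2, q3, q4, q5, q6]
  set R := ((1 + a*p)^(k+1) * (1 + b*q)^(k+1) * (1 + (a+b)*(p+q))^k) with hR
  have hR0 : 0 < R := by positivity
  set I := ∫ r in (0:ℝ)..b, ∫ s in (0:ℝ)..a, ff k a b p q r s with hI
  set V := (a * (a + b) * b) ^ (2*k) with hV
  have hV0 : 0 < V := by positivity
  set P := a^(4*k) * b^(2*k) with hP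
  have hP0 : 0 < P := by positivity
  have hE00 : 0 < E0 := exp_pos _
  have hI0 : 0 ≤ I := le_trans (by positivity) h1
  set t := (2:ℝ)^(2*k) with ht
  have ht0 : 0 < t := by positivity
  clear_value R I V P E0 t N
  have k1 : 0 < C * N := by positivity
  have k2 : 0 < C * t / N := by positivity
  constructor
  · calc _ ≤ (C * t / N)⁻¹ * (E0 / R) := by gcongr; linarith
      _ = N / (t * P) * (E0 * (C⁻¹ * (P * (1/R)))) := by field_simp
      _ ≤ N / V * (E0 * I) := by gcongr
  · calc _ ≤ N / P * (E0 * (C * (P * (1/R)))) := by gcongr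
      _ = (C * N) * (E0 / R) := by field_simp
      _ ≤ _ := by gcongr; linarith
end
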